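/- (Weighted Sobolev estimate on ℝ³.) Fix γ ∈ (1,3). There exists a constant C > 0 (depending only on γ) such that for every smooth compactly supported ψ : ℝ³ → ℝ, sup_{x ∈ ℝ³, x ≠ 0} (1+|x|)^{(γ+1)/2}|ψ(x)| ≤ C·Σ_{k+|β| ≤ 3} ( ∫_{ℝ³} (1+|x|)^{γ−2} |((⟨r⟩∂_r)^k Ω^β ψ)(x)|² dx )^{1/2}, where the sum is over all k ≥ 0 and all finite compositions Ω^β of the rotation vector fields Ω_{ij} of total length |β|, with k + |β| ≤ 3. -/

import Mathlib

/-!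
The value of `ψ` at a point is bounded by averages of `ψ` and its derivatives through the fundamental
theorem of calculus, separately in the radius and in the two angles. In spherical coordinates
adapted to `x`, angular derivatives are linear combinations of rotation fields (`rotCoef`), so on a
sphere of radius `t` two rotations bound the value at a point by `L¹` norms over a spherical square
of any side `δ` (`enorm_le_lintegral_Q`). Since `euler = r∂_r` commutes with rotations, the same
bound holds for `∂_rψ` (`enorm_rad1_le_Q`). Integrals over angles and radii are compared with `L²`
norms on shells by Cauchy–Schwarz against `t⁻²dt` (`lintegral_shell_le`), the volume element being
comparable to `t²dt` times the area of the angles.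

For `r = |x| ≥ 1` (`far_bound`), averaging over `r < |y| < 2r` and a unit square of angles gives the
factor `r⁻¹` from the radial average and `r^{-1/2}` from Cauchy–Schwarz, which with the weight
`(1+r)^{(2-γ)/2}` is `(1+r)^{-(γ+1)/2}`; at most two rotations and one radial derivative occur.

For `|x| < 1`, where the bound for `ψ` itself would degenerate as `x → 0`, one has
`|ψ(x)| ≤ |ψ(x/|x|)| + ∫₀¹ |∂_rψ| dt` along the ray through `x`. At radius `t`, `∂_rψ` is estimated
over a spherical square of side `δ = t^{3/4}` (`near_bound`). The term with two rotations is of top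
order and is handled by Cauchy–Schwarz in all variables, as `∫₀¹ δ² t⁻² dt < ∞`. In the terms with
fewer rotations one more radial derivative is available: integrating `∂_r²` outwards bounds them by
`t^{-7/8}` times `L²` norms, and this is integrable on `(0, 1)`. Altogether at most two radial
derivatives and total order three are used, and the weighted integrals with at most two radial
derivatives are finite (`integrable_weight`).
-/

noncomputable section

open MeasureTheory

/-- Euclidean `ℝ³`. -/
abbrev E3 := EuclideanSpace ℝ (Fin 3)

/-- Partial derivative `∂_i`. -/
def dxE (i : Fin 3) (f : E3 → ℝ) : E3 → ℝ := fun x => fderiv ℝ f x (EuclideanSpace.single i 1)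

/-- Radial derivative `∂_rψ(x) = (x/|x|)·∇ψ(x)`. -/
def drE (f : E3 → ℝ) : E3 → ℝ := fun x => ∑ i, (x i / ‖x‖) * dxE i f x

/-- The operator `⟨r⟩∂_r : ψ ↦ (1+|x|)·∂_rψ(x)`. -/
def radOp (f : E3 → ℝ) : E3 → ℝ := fun x => (1 + ‖x‖) * drE f x

/-- Indices of the rotation vector fields `Ω_{ij}`, `1 ≤ i < j ≤ 3`. -/
abbrev RotIdx := {p : Fin 3 × Fin 3 // p.1 < p.2}

/-- Rotation vector field `Ω_{ij} = x_i∂_j − x_j∂_i`. -/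
def rotOp (q : RotIdx) (f : E3 → ℝ) : E3 → ℝ :=
  fun x => x q.1.1 * dxE q.1.2 f x - x q.1.2 * dxE q.1.1 f x

/-- Composition `Ω^β` of rotation vector fields given by a word `β`. -/
def compRot {m : ℕ} (β : Fin m → RotIdx) (f : E3 → ℝ) : E3 → ℝ :=
  (List.ofFn β).foldr rotOp f

section

open Set
open scoped ENNReal ContDiff

/-! ### Spherical coordinates -/

/-- Spherical coordinates in the frame `e`: `t` is the radius, `p.1` the longitude and `p.2` the
latitude, so that `Phi e t (0, 0) = t • e 0`. -/
def Phi (e : OrthonormalBasis (Fin 3) ℝ E3) (t : ℝ) (p : ℝ × ℝ) : E3 :=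
  t • (Real.cos p.2 • (Real.cos p.1 • e 0 + Real.sin p.1 • e 1) + Real.sin p.2 • e 2)

/-- The open square `(0, δ)²` of angles (longitude, latitude), with a corner at `(0, 0)`. -/
def Q (δ : ℝ) : Set (ℝ × ℝ) := Ioo 0 δ ×ˢ Ioo 0 δ

/-- Lebesgue measure on `E3` in the orthonormal coordinates given by `e`. -/
lemma lintegral_frame (e : OrthonormalBasis (Fin 3) ℝ E3) {w : E3 → ℝ≥0∞} (hw : Measurable w) :
    ∫⁻ y, w y = ∫⁻ z : ℝ, ∫⁻ x : ℝ × ℝ, w (x.1 • e 0 + x.2 • e 1 + z • e 2) := by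
  have h1 := (e.measurePreserving_repr_symm).comp
    (PiLp.volume_preserving_toLp (Fin 3))
  have h2 := h1.comp (volume_preserving_piFinSuccAbove (fun _ : Fin 3 => ℝ) 2).symm
  have h3 := h2.comp ((MeasurePreserving.id (volume : Measure ℝ)).prod
    (volume_preserving_finTwoArrow ℝ).symm)
  have h4 := lintegral_prod (μ := (volume : Measure ℝ)) (ν := (volume : Measure (ℝ × ℝ))) _
    (hw.comp h3.measurable).aemeasurable
  rw [← h3.lintegral_comp hw]
  refine h4.trans ?_
  refine lintegral_congr fun z => lintegral_congr fun x => ?_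
  change w (e.repr.symm (WithLp.toLp 2 ((MeasurableEquiv.piFinSuccAbove (fun _ : Fin 3 => ℝ) 2).symm
    (z, MeasurableEquiv.finTwoArrow.symm x)))) = _
  congr 1
  rw [← e.sum_repr (e.repr.symm _)]
  simp [Fin.sum_univ_three, MeasurableEquiv.piFinSuccAbove, MeasurableEquiv.finTwoArrow,
    Fin.insertNthEquiv]
  rfl

/-- One-sided change of variables for spherical coordinates on `Q 1`, where the Jacobian
`t² cos b` is at least `t² / 2`. It is obtained by applying planar polar coordinates twice: to
(radius, latitude), then to (horizontal radius, longitude). -/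
lemma lintegral_spherical_le (e : OrthonormalBasis (Fin 3) ℝ E3) {w : E3 → ℝ≥0∞}
    (hw : Measurable w) :
    ∫⁻ p in Q 1, ∫⁻ t in Ioi (0:ℝ), ENNReal.ofReal (t ^ 2) * w (Phi e t p) ≤
      2 * ∫⁻ y, w y := by
  have hsub : Ioi (0:ℝ) ×ˢ Ioo (0:ℝ) 1 ⊆ polarCoord.target := by
    rintro ⟨r, a⟩ ⟨hr, ha⟩
    refine ⟨hr, ?_, ?_⟩
    · linarith [ha.1, Real.pi_pos]
    · linarith [ha.2, Real.pi_gt_three]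
  have key : ∀ f : ℝ × ℝ → ℝ≥0∞, Measurable f →
      ∫⁻ a in Ioo (0:ℝ) 1, ∫⁻ r in Ioi (0:ℝ), ENNReal.ofReal r *
        f (r * Real.cos a, r * Real.sin a) ≤ ∫⁻ x, f x := by
    intro f hf
    rw [← lintegral_comp_polarCoord_symm]
    refine le_trans (le_of_eq ?_) (lintegral_mono_set hsub)
    rw [Measure.volume_eq_prod, ← Measure.prod_restrict, lintegral_prod_symm]
    · rfl
    · simp only [polarCoord_symm_apply, smul_eq_mul]
      fun_prop
  rw [lintegral_frame e hw]
  calc _ = ∫⁻ a in Ioo (0:ℝ) 1, ∫⁻ b in Ioo (0:ℝ) 1, ∫⁻ t in Ioi (0:ℝ),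
        ENNReal.ofReal (t ^ 2) * w (Phi e t (a, b)) := by
        rw [Q, Measure.volume_eq_prod, ← Measure.prod_restrict, lintegral_prod]
        refine (Measurable.lintegral_prod_right' (f := fun q : (ℝ × ℝ) × ℝ =>
          ENNReal.ofReal (q.2 ^ 2) * w (Phi e q.2 q.1)) ?_).aemeasurable
        have : Measurable fun q : (ℝ × ℝ) × ℝ => Phi e q.2 q.1 := by
          unfold Phi; fun_prop
        exact (by fun_prop : Measurable fun q : (ℝ × ℝ) × ℝ =>
          ENNReal.ofReal (q.2 ^ 2)).mul (hw.comp this)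
    _ ≤ ∫⁻ a in Ioo (0:ℝ) 1, 2 * ∫⁻ x : ℝ × ℝ, (Ioi (0:ℝ)).indicator (fun r =>
        ENNReal.ofReal r * w ((r * Real.cos a) • e 0 + (r * Real.sin a) • e 1 + x.2 • e 2)) x.1 := by
        refine lintegral_mono fun a => ?_
        have hma : Measurable fun x : ℝ × ℝ => (Ioi (0:ℝ)).indicator (fun r =>
          ENNReal.ofReal r * w ((r * Real.cos a) • e 0 + (r * Real.sin a) • e 1 + x.2 • e 2)) x.1 := by
          have : Measurable (({x : ℝ × ℝ | 0 < x.1}).indicator fun x : ℝ × ℝ =>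
            ENNReal.ofReal x.1 * w ((x.1 * Real.cos a) • e 0 + (x.1 * Real.sin a) • e 1 + x.2 • e 2)) := by
            refine Measurable.indicator ?_ (measurableSet_lt measurable_const measurable_fst)
            exact (by fun_prop : Measurable fun x : ℝ × ℝ => ENNReal.ofReal x.1).mul
              (hw.comp (by fun_prop))
          exact this
        refine le_trans ?_ (mul_le_mul_right (key _ hma) 2)
        rw [← lintegral_const_mul' _ _ (by simp)]
        refine setLIntegral_mono' measurableSet_Ioo fun b hb => ?_
        rw [← lintegral_const_mul' _ _ (by simp)]
        refine setLIntegral_mono' measurableSet_Ioi fun t ht => ?_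
        have ht : 0 < t := ht
        have hcos : 1 / 2 ≤ Real.cos b := by
          nlinarith [Real.one_sub_sq_div_two_le_cos (x := b), hb.1, hb.2]
        have hpos : t * Real.cos b ∈ Ioi (0:ℝ) := mul_pos ht (by linarith)
        simp only [indicator_of_mem hpos]
        have hPhi : Phi e t (a, b) = (t * Real.cos b * Real.cos a) • e 0 +
            (t * Real.cos b * Real.sin a) • e 1 + (t * Real.sin b) • e 2 := by
          simp only [Phi, smul_add, smul_smul, mul_assoc]
        rw [hPhi, ← mul_assoc, ← mul_assoc]
        refine mul_le_mul_left ?_ _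
        rw [← ENNReal.ofReal_ofNat, ← ENNReal.ofReal_mul (by norm_num),
          ← ENNReal.ofReal_mul (by positivity)]
        refine ENNReal.ofReal_le_ofReal ?_
        nlinarith [mul_le_mul_of_nonneg_left hcos (sq_nonneg t)]
    _ = 2 * ∫⁻ z : ℝ, ∫⁻ a in Ioo (0:ℝ) 1, ∫⁻ r in Ioi (0:ℝ), ENNReal.ofReal r *
          w ((r * Real.cos a) • e 0 + (r * Real.sin a) • e 1 + z • e 2) := by
        have hG : Measurable fun q : (ℝ × ℝ) × ℝ => ENNReal.ofReal q.2 *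
            w ((q.2 * Real.cos q.1.1) • e 0 + (q.2 * Real.sin q.1.1) • e 1 + q.1.2 • e 2) :=
          (by fun_prop : Measurable fun q : (ℝ × ℝ) × ℝ => ENNReal.ofReal q.2).mul
            (hw.comp (by fun_prop))
        rw [lintegral_const_mul' _ _ (by simp)]
        congr 1
        refine Eq.trans ?_ (lintegral_lintegral_swap (f := fun a z => ∫⁻ r in Ioi (0:ℝ),
          ENNReal.ofReal r *
            w ((r * Real.cos a) • e 0 + (r * Real.sin a) • e 1 + z • e 2)) ?_)
        · refine lintegral_congr fun a => ?_
          have hGa : Measurable fun x : ℝ × ℝ => (Ioi (0:ℝ)).indicator (fun r =>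
              ENNReal.ofReal r * w ((r * Real.cos a) • e 0 + (r * Real.sin a) • e 1 + x.2 • e 2))
                x.1 := by
            have : Measurable (({x : ℝ × ℝ | 0 < x.1}).indicator fun x : ℝ × ℝ =>
              ENNReal.ofReal x.1 *
                w ((x.1 * Real.cos a) • e 0 + (x.1 * Real.sin a) • e 1 + x.2 • e 2)) := by
              refine Measurable.indicator ?_ (measurableSet_lt measurable_const measurable_fst)
              exact (by fun_prop : Measurable fun x : ℝ × ℝ => ENNReal.ofReal x.1).mul
                (hw.comp (by fun_prop))
            exact this
          rw [Measure.volume_eq_prod, lintegral_prod_symm _ hGa.aemeasurable]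
          refine lintegral_congr fun z => ?_
          exact lintegral_indicator measurableSet_Ioi _
        · exact (Measurable.lintegral_prod_right' hG).aemeasurable
    _ ≤ _ := by
        refine mul_le_mul_right (lintegral_mono fun z => ?_) 2
        exact key (fun x => w (x.1 • e 0 + x.2 • e 1 + z • e 2)) (hw.comp (by fun_prop))

/-! ### Rotation fields -/

/-- The first-order operator `h ↦ (Ax)·∇h(x)`. -/
def linOp (A : E3 →L[ℝ] E3) (h : E3 → ℝ) : E3 → ℝ := fun y => fderiv ℝ h y (A y)

/-- The skew map `y ↦ ⟨u, y⟩v - ⟨v, y⟩u`, which generates the rotations in the plane of `u` and `v`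
when these are orthonormal. -/
def rotGen (u v : E3) : E3 →L[ℝ] E3 := (innerSL ℝ u).smulRight v - (innerSL ℝ v).smulRight u

lemma rotGen_apply (u v y : E3) : rotGen u v y = inner ℝ u y • v - inner ℝ v y • u := by
  simp [rotGen]

lemma rotOp_eq (q : RotIdx) (h : E3 → ℝ) :
    rotOp q h = linOp (rotGen (EuclideanSpace.single q.1.1 1) (EuclideanSpace.single q.1.2 1)) h := by
  ext y
  simp [rotOp, linOp, rotGen_apply, dxE, EuclideanSpace.inner_single_left]

lemma linOp_smooth (A : E3 →L[ℝ] E3) {h : E3 → ℝ} (hh : ContDiff ℝ ∞ h) :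
    ContDiff ℝ ∞ (linOp A h) := by
  have : ContDiff ℝ ∞ (fderiv ℝ h) := hh.fderiv_right (by simp)
  exact this.clm_apply A.contDiff

lemma rotOp_smooth (q : RotIdx) {h : E3 → ℝ} (hh : ContDiff ℝ ∞ h) :
    ContDiff ℝ ∞ (rotOp q h) := by
  rw [rotOp_eq]; exact linOp_smooth _ hh

lemma rotOp_compact (q : RotIdx) {h : E3 → ℝ} (hh : HasCompactSupport h) :
    HasCompactSupport (rotOp q h) := by
  rw [rotOp_eq]
  refine (hh.fderiv (𝕜 := ℝ)).mono ?_
  intro y hy h0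
  exact hy (by simp [linOp, h0])

lemma linOp_apply_smooth {h : E3 → ℝ} (hh : ContDiff ℝ ∞ h) (A : E3 →L[ℝ] E3) (y v : E3) :
    fderiv ℝ (linOp A h) y v = fderiv ℝ (fderiv ℝ h) y v (A y) + fderiv ℝ h y (A v) := by
  have h1 : DifferentiableAt ℝ (fderiv ℝ h) y :=
    ((hh.fderiv_right (m := ∞) (by simp)).differentiable (by simp)).differentiableAt
  have := (h1.hasFDerivAt.clm_apply (A.hasFDerivAt (x := y))).fderiv
  unfold linOp
  rw [this]
  simp [add_comm]

lemma linOp_comm {h : E3 → ℝ} (hh : ContDiff ℝ ∞ h) (A B : E3 →L[ℝ] E3)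
    (hAB : ∀ y, A (B y) = B (A y)) : linOp A (linOp B h) = linOp B (linOp A h) := by
  ext y
  have hs : IsSymmSndFDerivAt ℝ h y := hh.contDiffAt.isSymmSndFDerivAt (by
    simpa using (WithTop.coe_le_coe.2 le_top : ((2 : ℕ∞) : WithTop ℕ∞) ≤ ((⊤ : ℕ∞) : WithTop ℕ∞)))
  change fderiv ℝ (linOp B h) y (A y) = fderiv ℝ (linOp A h) y (B y)
  rw [linOp_apply_smooth hh, linOp_apply_smooth hh, hAB, hs.eq]

/-- The scaling field `r∂_r = y·∇`. Unlike `∂_r` it preserves smoothness at the origin, and it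
commutes with rotations. -/
abbrev euler (h : E3 → ℝ) : E3 → ℝ := linOp (ContinuousLinearMap.id ℝ E3) h

lemma rotOp_euler {h : E3 → ℝ} (hh : ContDiff ℝ ∞ h) (q : RotIdx) :
    rotOp q (euler h) = euler (rotOp q h) := by
  rw [rotOp_eq, rotOp_eq]
  exact linOp_comm hh _ _ fun y => rfl

lemma sum_rotIdx {M : Type*} [AddCommMonoid M] (f : RotIdx → M) :
    ∑ q, f q = f ⟨(0, 1), by decide⟩ + f ⟨(0, 2), by decide⟩ + f ⟨(1, 2), by decide⟩ := by
  have : (Finset.univ : Finset RotIdx) =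
      {⟨(0, 1), by decide⟩, ⟨(0, 2), by decide⟩, ⟨(1, 2), by decide⟩} := by decide
  rw [this, Finset.sum_insert (by decide), Finset.sum_insert (by decide), Finset.sum_singleton,
    add_assoc]

/-- The coefficient of `u ∧ v` along `e_i ∧ e_j`, where `q = (i, j)` and `e_i` is the standard basis. -/
def rotCoef (u v : E3) (q : RotIdx) : ℝ := u q.1.1 * v q.1.2 - u q.1.2 * v q.1.1

lemma linOp_rotGen (u v : E3) (h : E3 → ℝ) (y : E3) :
    linOp (rotGen u v) h y = ∑ q, rotCoef u v q * rotOp q h y := by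
  have : rotGen u v y = ∑ q : RotIdx, rotCoef u v q •
      rotGen (EuclideanSpace.single q.1.1 1) (EuclideanSpace.single q.1.2 1) y := by
    rw [sum_rotIdx]
    simp only [rotGen_apply, rotCoef, PiLp.inner_apply,
      Fin.sum_univ_three]
    ext i
    fin_cases i <;> simp <;> ring
  simp only [rotOp_eq]
  unfold linOp
  rw [this, map_sum]
  simp

lemma abs_rotCoef_le {u v : E3} (hu : ‖u‖ = 1) (hv : ‖v‖ = 1) (q : RotIdx) :
    |rotCoef u v q| ≤ 2 := by
  have h : ∀ (w : E3) (i : Fin 3), ‖w‖ = 1 → |w i| ≤ 1 := fun w i hw => by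
    have := PiLp.norm_apply_le w i
    rwa [hw] at this
  have h1 := abs_le.1 (h u q.1.1 hu)
  have h2 := abs_le.1 (h u q.1.2 hu)
  have h3 := abs_le.1 (h v q.1.1 hv)
  have h4 := abs_le.1 (h v q.1.2 hv)
  rw [rotCoef]
  refine (abs_sub _ _).trans ?_
  rw [abs_mul, abs_mul]
  nlinarith [h u q.1.1 hu, h u q.1.2 hu, h v q.1.1 hv, h v q.1.2 hv, abs_nonneg (u q.1.1),
    abs_nonneg (u q.1.2), abs_nonneg (v q.1.1), abs_nonneg (v q.1.2)]

/-- `∑ |Ω_q h|`, the sum over the three rotation fields. -/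
def rot1 (h : E3 → ℝ) (y : E3) : ℝ≥0∞ := ∑ q, ‖rotOp q h y‖ₑ

/-- `∑ |Ω_p Ω_q h|`, the sum over all words of length two. -/
def rot2 (h : E3 → ℝ) (y : E3) : ℝ≥0∞ := ∑ q, rot1 (rotOp q h) y

lemma enorm_linOp_rotGen_le {u v : E3} (hu : ‖u‖ = 1) (hv : ‖v‖ = 1) (h : E3 → ℝ) (y : E3) :
    ‖linOp (rotGen u v) h y‖ₑ ≤ 2 * rot1 h y := by
  rw [linOp_rotGen, rot1, Finset.mul_sum]
  refine (enorm_sum_le _ _).trans (Finset.sum_le_sum fun q _ => ?_)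
  rw [enorm_mul]
  gcongr
  rw [Real.enorm_eq_ofReal_abs, ← ENNReal.ofReal_ofNat]
  exact ENNReal.ofReal_le_ofReal (abs_rotCoef_le hu hv q)

lemma rot1_linOp_rotGen_le {u v : E3} (hu : ‖u‖ = 1) (hv : ‖v‖ = 1) {h : E3 → ℝ}
    (hh : ContDiff ℝ ∞ h) (y : E3) :
    rot1 (linOp (rotGen u v) h) y ≤ 2 * rot2 h y := by
  have h0 : linOp (rotGen u v) h = fun y => ∑ q, rotCoef u v q * rotOp q h y :=
    funext (linOp_rotGen u v h)
  have h1 : ∀ p, rotOp p (linOp (rotGen u v) h) y =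
      ∑ q, rotCoef u v q * rotOp p (rotOp q h) y := by
    intro p
    rw [h0]
    simp only [rotOp_eq p]
    unfold linOp
    rw [fderiv_fun_sum]
    · simp only [_root_.sum_apply]
      refine Finset.sum_congr rfl fun q _ => ?_
      rw [fderiv_const_mul ((rotOp_smooth q hh).differentiable (by simp)).differentiableAt]
      rfl
    · intro q _
      exact (((rotOp_smooth q hh).differentiable (by simp)).differentiableAt).const_mul _
  calc rot1 (linOp (rotGen u v) h) y = ∑ p, ‖∑ q, rotCoef u v q * rotOp p (rotOp q h) y‖ₑ := by
        simp only [rot1, h1]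
    _ ≤ ∑ p, ∑ q, 2 * ‖rotOp p (rotOp q h) y‖ₑ := by
        refine Finset.sum_le_sum fun p _ => ?_
        refine (enorm_sum_le _ _).trans (Finset.sum_le_sum fun q _ => ?_)
        rw [enorm_mul]
        gcongr
        rw [Real.enorm_eq_ofReal_abs, ← ENNReal.ofReal_ofNat]
        exact ENNReal.ofReal_le_ofReal (abs_rotCoef_le hu hv q)
    _ = 2 * rot2 h y := by
        rw [Finset.sum_comm]
        simp only [rot2, rot1, Finset.mul_sum]

/-! ### Averaging over angles -/

lemma enorm_le_add_lintegral {u u' : ℝ → ℝ} (hu : ∀ t, HasDerivAt u (u' t) t)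
    (hc : Continuous u') {α β a s : ℝ} (ha : a ∈ Icc α β) (hs : s ∈ Icc α β) :
    ‖u a‖ₑ ≤ ‖u s‖ₑ + ∫⁻ x in Ioo α β, ‖u' x‖ₑ := by
  have h1 : u a = u s + ∫ x in s..a, u' x := by
    rw [intervalIntegral.integral_eq_sub_of_hasDerivAt (fun x _ => hu x)
      (hc.intervalIntegrable _ _)]
    ring
  rw [h1]
  refine (enorm_add_le _ _).trans (add_le_add le_rfl ?_)
  rw [setLIntegral_congr Ioo_ae_eq_Ioc]
  calc ‖∫ x in s..a, u' x‖ₑ = ‖∫ x in uIoc s a, u' x‖ₑ := by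
        rw [← ofReal_norm, ← ofReal_norm, intervalIntegral.norm_intervalIntegral_eq]
    _ ≤ ∫⁻ x in uIoc s a, ‖u' x‖ₑ := enorm_integral_le_lintegral_enorm _
    _ ≤ _ := lintegral_mono_set (Ioc_subset_Ioc (le_min hs.1 ha.1) (max_le hs.2 ha.2))

/-- A point value is bounded by the average over an interval plus the integral of the derivative. -/
lemma enorm_le_lintegral {u u' : ℝ → ℝ} (hu : ∀ t, HasDerivAt u (u' t) t)
    (hc : Continuous u') {α β a : ℝ} (hαβ : α < β) (ha : a ∈ Icc α β) :
    ‖u a‖ₑ ≤ ∫⁻ s in Ioo α β, (ENNReal.ofReal (β - α)⁻¹ * ‖u s‖ₑ + ‖u' s‖ₑ) := by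
  have hcu : Continuous u := continuous_iff_continuousAt.2 fun t => (hu t).continuousAt
  have hpos : 0 < β - α := sub_pos.2 hαβ
  have hone : ENNReal.ofReal (β - α)⁻¹ * ENNReal.ofReal (β - α) = 1 := by
    rw [← ENNReal.ofReal_mul (by positivity), inv_mul_cancel₀ hpos.ne', ENNReal.ofReal_one]
  rw [lintegral_add_right _ hc.enorm.measurable, lintegral_const_mul _ hcu.enorm.measurable]
  have h := setLIntegral_mono' (μ := volume) (f := fun _ => ‖u a‖ₑ)
    (g := fun s => ‖u s‖ₑ + ∫⁻ x in Ioo α β, ‖u' x‖ₑ) measurableSet_Ioo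
    (fun s (hs : s ∈ Ioo α β) => enorm_le_add_lintegral hu hc ha (Ioo_subset_Icc_self hs))
  rw [lintegral_add_right _ measurable_const, setLIntegral_const, setLIntegral_const,
    Real.volume_Ioo] at h
  calc ‖u a‖ₑ = ENNReal.ofReal (β - α)⁻¹ * (‖u a‖ₑ * ENNReal.ofReal (β - α)) := by
        rw [mul_comm ‖u a‖ₑ, ← mul_assoc, hone, one_mul]
    _ ≤ _ := mul_le_mul_right h _
    _ = _ := by
        rw [mul_add, mul_comm (∫⁻ x in Ioo α β, ‖u' x‖ₑ), ← mul_assoc _ (ENNReal.ofReal (β - α)),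
          hone, one_mul]

lemma Phi_eq_smul (e : OrthonormalBasis (Fin 3) ℝ E3) (t : ℝ) (p : ℝ × ℝ) :
    Phi e t p = t • Phi e 1 p := by simp [Phi]

lemma inner_Phi (e : OrthonormalBasis (Fin 3) ℝ E3) (t : ℝ) (p : ℝ × ℝ) :
    inner ℝ (e 0) (Phi e t p) = t * (Real.cos p.2 * Real.cos p.1) ∧
    inner ℝ (e 1) (Phi e t p) = t * (Real.cos p.2 * Real.sin p.1) ∧
    inner ℝ (e 2) (Phi e t p) = t * Real.sin p.2 := by
  simp [Phi, inner_add_right, inner_smul_right, e.inner_eq_ite]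

lemma norm_Phi (e : OrthonormalBasis (Fin 3) ℝ E3) (t : ℝ) (p : ℝ × ℝ) :
    ‖Phi e t p‖ = |t| := by
  have h : ‖Phi e t p‖ ^ 2 = t ^ 2 := by
    rw [← e.sum_sq_norm_inner_right, Fin.sum_univ_three]
    obtain ⟨h0, h1, h2⟩ := inner_Phi e t p
    rw [h0, h1, h2]
    simp only [Real.norm_eq_abs, sq_abs]
    nlinarith [Real.sin_sq_add_cos_sq p.1, Real.sin_sq_add_cos_sq p.2,
      congrArg (fun x => t ^ 2 * Real.cos p.2 ^ 2 * x) (Real.sin_sq_add_cos_sq p.1),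
      congrArg (fun x => t ^ 2 * x) (Real.sin_sq_add_cos_sq p.2)]
  rw [← sq_abs t] at h
  exact (pow_left_inj₀ (norm_nonneg _) (abs_nonneg _) two_ne_zero).1 h

lemma continuous_Phi (e : OrthonormalBasis (Fin 3) ℝ E3) :
    Continuous fun z : ℝ × ℝ × ℝ => Phi e z.1 z.2 := by
  unfold Phi; fun_prop

lemma measurable_Phi (e : OrthonormalBasis (Fin 3) ℝ E3) (t : ℝ) : Measurable (Phi e t) :=
  ((continuous_Phi e).comp (by fun_prop : Continuous fun p : ℝ × ℝ => (t, p))).measurable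

lemma hasDerivAt_Phi_fst (e : OrthonormalBasis (Fin 3) ℝ E3) (t b a : ℝ) :
    HasDerivAt (fun a => Phi e t (a, b)) (rotGen (e 0) (e 1) (Phi e t (a, b))) a := by
  obtain ⟨h0, h1, h2⟩ := inner_Phi e t (a, b)
  rw [rotGen_apply, h0, h1]
  unfold Phi
  have := (((((Real.hasDerivAt_cos a).smul_const (e 0)).add
    ((Real.hasDerivAt_sin a).smul_const (e 1))).const_smul (Real.cos b)).add_const
      (Real.sin b • e 2)).const_smul t
  refine HasDerivAt.congr_deriv this ?_
  module

/-- The unit vector of longitude `a` in the plane of `e 0` and `e 1`. Increasing the latitude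
rotates in the plane of `horiz e a` and `e 2`. -/
def horiz (e : OrthonormalBasis (Fin 3) ℝ E3) (a : ℝ) : E3 :=
  Real.cos a • e 0 + Real.sin a • e 1

lemma norm_horiz (e : OrthonormalBasis (Fin 3) ℝ E3) (a : ℝ) : ‖horiz e a‖ = 1 := by
  have := norm_Phi e 1 (a, 0)
  simpa [Phi, horiz] using this

lemma hasDerivAt_Phi_snd (e : OrthonormalBasis (Fin 3) ℝ E3) (t a b : ℝ) :
    HasDerivAt (fun b => Phi e t (a, b)) (rotGen (horiz e a) (e 2) (Phi e t (a, b))) b := by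
  obtain ⟨h0, h1, h2⟩ := inner_Phi e t (a, b)
  have h3 : inner ℝ (horiz e a) (Phi e t (a, b)) = t * Real.cos b := by
    rw [horiz, inner_add_left, inner_smul_left, inner_smul_left, h0, h1]
    simp only [conj_trivial]
    linear_combination t * Real.cos b * Real.sin_sq_add_cos_sq a
  rw [rotGen_apply, h3, h2]
  unfold Phi horiz
  have := (((Real.hasDerivAt_cos b).smul_const (Real.cos a • e 0 + Real.sin a • e 1)).add
    ((Real.hasDerivAt_sin b).smul_const (e 2))).const_smul t
  refine HasDerivAt.congr_deriv this ?_
  module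

lemma hasDerivAt_comp_curve {h : E3 → ℝ} (hh : ContDiff ℝ ∞ h) {c : ℝ → E3} {c' : E3} {s : ℝ}
    (hc : HasDerivAt c c' s) : HasDerivAt (fun s => h (c s)) (fderiv ℝ h (c s) c') s :=
  (hh.differentiable (by simp)).differentiableAt.hasFDerivAt.comp_hasDerivAt s hc

lemma measurable_rot1 {h : E3 → ℝ} (hh : ContDiff ℝ ∞ h) : Measurable (rot1 h) :=
  Finset.measurable_sum _ fun q _ => (rotOp_smooth q hh).continuous.enorm.measurable

lemma measurable_rot2 {h : E3 → ℝ} (hh : ContDiff ℝ ∞ h) : Measurable (rot2 h) :=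
  Finset.measurable_sum _ fun q _ => measurable_rot1 (rotOp_smooth q hh)

lemma enorm_le_lintegral_fst {h : E3 → ℝ} (hh : ContDiff ℝ ∞ h)
    (e : OrthonormalBasis (Fin 3) ℝ E3) (t b : ℝ) {δ a : ℝ} (hδ : 0 < δ) (ha : a ∈ Icc 0 δ) :
    ‖h (Phi e t (a, b))‖ₑ ≤ ∫⁻ s in Ioo 0 δ, (ENNReal.ofReal δ⁻¹ * ‖h (Phi e t (s, b))‖ₑ +
      ‖linOp (rotGen (e 0) (e 1)) h (Phi e t (s, b))‖ₑ) := by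
  have := enorm_le_lintegral
    (fun s => hasDerivAt_comp_curve hh (hasDerivAt_Phi_fst e t b s))
    ((linOp_smooth (rotGen (e 0) (e 1)) hh).continuous.comp
      ((continuous_Phi e).comp (by fun_prop : Continuous fun s : ℝ => (t, (s, b))))) hδ ha
  rwa [sub_zero] at this

lemma enorm_le_lintegral_snd {h : E3 → ℝ} (hh : ContDiff ℝ ∞ h)
    (e : OrthonormalBasis (Fin 3) ℝ E3) (t a : ℝ) {δ : ℝ} (hδ : 0 < δ) :
    ‖h (Phi e t (a, 0))‖ₑ ≤ ∫⁻ s in Ioo 0 δ, (ENNReal.ofReal δ⁻¹ * ‖h (Phi e t (a, s))‖ₑ +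
      2 * rot1 h (Phi e t (a, s))) := by
  have := enorm_le_lintegral
    (fun s => hasDerivAt_comp_curve hh (hasDerivAt_Phi_snd e t a s))
    ((linOp_smooth (rotGen (horiz e a) (e 2)) hh).continuous.comp
      ((continuous_Phi e).comp (by fun_prop : Continuous fun s : ℝ => (t, (a, s))))) hδ
    (left_mem_Icc.2 hδ.le)
  rw [sub_zero] at this
  refine this.trans (lintegral_mono fun s => add_le_add le_rfl ?_)
  exact enorm_linOp_rotGen_le (norm_horiz e a) (e.norm_eq_one 2) h _

/-- A point value on a sphere is bounded by an integral over a spherical square of side `δ`: apply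
the one-dimensional averaging bound in each of the two angles. Both angular derivatives are
combinations of rotation fields with coefficients at most two. -/
lemma enorm_le_lintegral_Q {h : E3 → ℝ} (hh : ContDiff ℝ ∞ h)
    (e : OrthonormalBasis (Fin 3) ℝ E3) (t : ℝ) {δ : ℝ} (hδ : 0 < δ) :
    ‖h (Phi e t (0, 0))‖ₑ ≤ ∫⁻ p in Q δ, (ENNReal.ofReal δ⁻¹ ^ 2 * ‖h (Phi e t p)‖ₑ +
      4 * ENNReal.ofReal δ⁻¹ * rot1 h (Phi e t p) + 4 * rot2 h (Phi e t p)) := by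
  set D := ENNReal.ofReal δ⁻¹
  have hk := linOp_smooth (rotGen (e 0) (e 1)) hh
  have hm : ∀ a b : ℝ, D * (D * ‖h (Phi e t (a, b))‖ₑ + 2 * rot1 h (Phi e t (a, b))) +
      (D * ‖linOp (rotGen (e 0) (e 1)) h (Phi e t (a, b))‖ₑ +
        2 * rot1 (linOp (rotGen (e 0) (e 1)) h) (Phi e t (a, b))) ≤
      D ^ 2 * ‖h (Phi e t (a, b))‖ₑ + 4 * D * rot1 h (Phi e t (a, b)) +
        4 * rot2 h (Phi e t (a, b)) := by
    intro a b
    have h1 := enorm_linOp_rotGen_le (e.norm_eq_one 0) (e.norm_eq_one 1) h (Phi e t (a, b))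
    have h2 := rot1_linOp_rotGen_le (e.norm_eq_one 0) (e.norm_eq_one 1) hh (Phi e t (a, b))
    calc _ ≤ D * (D * ‖h (Phi e t (a, b))‖ₑ + 2 * rot1 h (Phi e t (a, b))) +
      (D * (2 * rot1 h (Phi e t (a, b))) + 2 * (2 * rot2 h (Phi e t (a, b)))) := by gcongr
      _ = _ := by ring
  have hmeas : ∀ b : ℝ, Measurable fun a : ℝ => Phi e t (a, b) := fun b =>
    (measurable_Phi e t).comp (by fun_prop)
  rw [Q, Measure.volume_eq_prod, ← Measure.prod_restrict, lintegral_prod]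
  · refine (enorm_le_lintegral_fst hh e t 0 hδ (left_mem_Icc.2 hδ.le)).trans
      (lintegral_mono fun a => ?_)
    refine (add_le_add (mul_le_mul_right (enorm_le_lintegral_snd hh e t a hδ) _)
      (enorm_le_lintegral_snd hk e t a hδ)).trans ?_
    have hP : Measurable fun s : ℝ => Phi e t (a, s) := (measurable_Phi e t).comp (by fun_prop)
    have hmr := (measurable_rot1 hh).comp hP
    have hmh := hh.continuous.enorm.measurable.comp hP
    rw [← lintegral_const_mul, ← lintegral_add_left]
    · exact lintegral_mono fun b => hm a b
    · exact ((hmh.const_mul D).add (hmr.const_mul 2)).const_mul D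
    · exact (hmh.const_mul D).add (hmr.const_mul 2)
  · refine Measurable.aemeasurable ?_
    have hP := measurable_Phi e t
    exact (((hh.continuous.enorm.measurable.comp hP).const_mul _).add
      (((measurable_rot1 hh).comp hP).const_mul _)).add (((measurable_rot2 hh).comp hP).const_mul _)

/-! ### Radial derivatives -/

/-- `∂_rφ`, as the derivative in the direction `y/‖y‖`; its value at `0` is `0`. -/
def rad1 (φ : E3 → ℝ) (y : E3) : ℝ := fderiv ℝ φ y (‖y‖⁻¹ • y)

/-- `∂_r²φ`, as the second derivative in the direction `y/‖y‖`; its value at `0` is `0`. -/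
def rad2 (φ : E3 → ℝ) (y : E3) : ℝ := fderiv ℝ (fderiv ℝ φ) y (‖y‖⁻¹ • y) (‖y‖⁻¹ • y)

lemma radOp_eq (φ : E3 → ℝ) (y : E3) : radOp φ y = (1 + ‖y‖) * rad1 φ y := by
  have : (‖y‖⁻¹ • y : E3) = ∑ i, (y i / ‖y‖) • EuclideanSpace.single i (1:ℝ) := by
    ext j
    fin_cases j <;> simp [Fin.sum_univ_three, div_eq_inv_mul]
  rw [radOp, drE, rad1, this, map_sum]
  simp [dxE]

lemma euler_eq (φ : E3 → ℝ) (y : E3) : euler φ y = ‖y‖ * rad1 φ y := by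
  rcases eq_or_ne y 0 with rfl | hy
  · simp [linOp]
  · have : ‖y‖ ≠ 0 := norm_ne_zero_iff.2 hy
    simp [linOp, rad1, this]

lemma radOp_radOp {φ : E3 → ℝ} (hφ : ContDiff ℝ ∞ φ) {y : E3} (hy : y ≠ 0) :
    radOp (radOp φ) y = (1 + ‖y‖) ^ 2 * rad2 φ y + radOp φ y := by
  have hn : 0 < ‖y‖ := norm_pos_iff.2 hy
  set v : E3 := ‖y‖⁻¹ • y with hv
  have hv1 : ‖v‖ = 1 := by rw [hv, norm_smul, norm_inv, norm_norm, inv_mul_cancel₀ hn.ne']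
  have hyv : ‖y‖ • v = y := by rw [hv, smul_smul, mul_inv_cancel₀ hn.ne', one_smul]
  have hfd : ContDiff ℝ ∞ (fderiv ℝ φ) := hφ.fderiv_right (by simp)
  have hdf : DifferentiableAt ℝ (radOp φ) y := by
    have h0 : radOp φ = fun y => (1 + ‖y‖) * fderiv ℝ φ y (‖y‖⁻¹ • y) := funext (radOp_eq φ)
    rw [h0]
    have hnd : DifferentiableAt ℝ (fun y : E3 => ‖y‖) y := differentiableAt_id.norm ℝ hy
    refine ((differentiableAt_const _).add hnd).mul ?_
    exact ((hfd.differentiable (by simp)).differentiableAt).clm_apply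
      ((hnd.inv hn.ne').smul differentiableAt_id)
  have hc : HasDerivAt (fun s : ℝ => s • v) v ‖y‖ := by
    simpa using (hasDerivAt_id ‖y‖).smul_const v
  have h1 : HasDerivAt (fun s : ℝ => radOp φ (s • v)) (fderiv ℝ (radOp φ) y v) ‖y‖ := by
    have : HasFDerivAt (radOp φ) (fderiv ℝ (radOp φ) y) (‖y‖ • v) := by
      rw [hyv]; exact hdf.hasFDerivAt
    exact this.comp_hasDerivAt _ hc
  have h2 : HasDerivAt (fun s : ℝ => (1 + s) * fderiv ℝ φ (s • v) v)
      (1 * fderiv ℝ φ y v + (1 + ‖y‖) * fderiv ℝ (fderiv ℝ φ) y v v) ‖y‖ := by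
    have h3 : HasDerivAt (fun s : ℝ => fderiv ℝ φ (s • v)) (fderiv ℝ (fderiv ℝ φ) y v) ‖y‖ := by
      have : HasFDerivAt (fderiv ℝ φ) (fderiv ℝ (fderiv ℝ φ) y) (‖y‖ • v) := by
        rw [hyv]; exact ((hfd.differentiable (by simp)).differentiableAt).hasFDerivAt
      exact this.comp_hasDerivAt _ hc
    have h4 := ((hasDerivAt_id ‖y‖).const_add 1).mul (h3.clm_apply (hasDerivAt_const ‖y‖ v))
    refine HasDerivAt.congr_deriv h4 ?_
    simp [hyv]
  have h5 : (fun s : ℝ => radOp φ (s • v)) =ᶠ[nhds ‖y‖]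
      fun s : ℝ => (1 + s) * fderiv ℝ φ (s • v) v := by
    filter_upwards [lt_mem_nhds hn] with s hs
    have hsv : ‖s • v‖ = s := by rw [norm_smul, hv1, Real.norm_of_nonneg hs.le, mul_one]
    rw [radOp_eq, rad1, hsv, inv_smul_smul₀ hs.ne']
  have h6 := h1.unique (h2.congr_of_eventuallyEq h5)
  rw [radOp_eq (radOp φ), rad1, ← hv, h6, radOp_eq, rad1, rad2, ← hv]
  ring

lemma measurable_radOp (f : E3 → ℝ) : Measurable (radOp f) := by
  unfold radOp drE dxE
  refine Measurable.mul (by fun_prop) (Finset.measurable_sum _ fun i _ => ?_)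
  exact Measurable.mul (by fun_prop) (measurable_fderiv_apply_const ℝ f _)

lemma measurable_rad1 (φ : E3 → ℝ) : Measurable (rad1 φ) := by
  have h : rad1 φ = fun y => (1 + ‖y‖)⁻¹ * radOp φ y := by
    ext y
    rw [radOp_eq, inv_mul_cancel_left₀ (by positivity)]
  rw [h]
  exact Measurable.mul (by fun_prop) (measurable_radOp φ)

lemma enorm_rad1_le (φ : E3 → ℝ) (y : E3) : ‖rad1 φ y‖ₑ ≤ ‖radOp φ y‖ₑ := by
  rw [radOp_eq, enorm_mul]
  refine le_mul_of_one_le_left' ?_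
  rw [Real.enorm_of_nonneg (by positivity), ENNReal.one_le_ofReal]
  linarith [norm_nonneg y]

lemma enorm_rad2_le {φ : E3 → ℝ} (hφ : ContDiff ℝ ∞ φ) {y : E3} (hy : y ≠ 0) :
    ‖rad2 φ y‖ₑ ≤ ‖radOp φ y‖ₑ + ‖radOp (radOp φ) y‖ₑ := by
  rw [← enorm_neg (radOp φ y)]
  refine le_trans ?_ (enorm_add_le _ _)
  rw [radOp_radOp hφ hy, show -radOp φ y + ((1 + ‖y‖) ^ 2 * rad2 φ y + radOp φ y) =
    (1 + ‖y‖) ^ 2 * rad2 φ y by ring, enorm_mul]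
  refine le_mul_of_one_le_left' ?_
  rw [Real.enorm_of_nonneg (by positivity), ENNReal.one_le_ofReal]
  nlinarith [norm_nonneg y]

lemma exists_bound_ball {F : Type*} [NormedAddCommGroup F] {g : E3 → F} (hg : Continuous g)
    (R : ℝ) : ∃ C, ∀ y, ‖y‖ ≤ R → ‖g y‖ ≤ C := by
  obtain ⟨C, hC⟩ := (isCompact_closedBall (0 : E3) R).exists_bound_of_continuousOn hg.continuousOn
  exact ⟨C, fun y hy => hC y (mem_closedBall_zero_iff.2 hy)⟩

lemma abs_rad1_le (φ : E3 → ℝ) (y : E3) : |rad1 φ y| ≤ ‖fderiv ℝ φ y‖ := by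
  have hv : ‖(‖y‖⁻¹ • y : E3)‖ ≤ 1 := by
    rw [norm_smul, norm_inv, norm_norm]
    exact inv_mul_le_one
  exact ((fderiv ℝ φ y).le_opNorm _).trans (mul_le_of_le_one_right (norm_nonneg _) hv)

lemma abs_rad2_le (φ : E3 → ℝ) (y : E3) : |rad2 φ y| ≤ ‖fderiv ℝ (fderiv ℝ φ) y‖ := by
  have hv : ‖(‖y‖⁻¹ • y : E3)‖ ≤ 1 := by
    rw [norm_smul, norm_inv, norm_norm]
    exact inv_mul_le_one
  refine ((fderiv ℝ (fderiv ℝ φ) y).le_opNorm₂ _ _).trans ?_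
  exact (mul_le_of_le_one_right (by positivity) hv).trans
    (mul_le_of_le_one_right (ContinuousLinearMap.opNorm_nonneg _) hv)

lemma exists_bound_radOp {φ : E3 → ℝ} (hφ : ContDiff ℝ ∞ φ)
    (R : ℝ) {k : ℕ} (hk : k ≤ 2) :
    ∃ B : ℝ, ∀ y : E3, y ≠ 0 → ‖y‖ ≤ R → |radOp^[k] φ y| ≤ B := by
  have hfd : ContDiff ℝ ∞ (fderiv ℝ φ) := hφ.fderiv_right (by simp)
  have hfd2 : ContDiff ℝ ∞ (fderiv ℝ (fderiv ℝ φ)) := hfd.fderiv_right (by simp)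
  obtain ⟨C0, h0⟩ := exists_bound_ball hφ.continuous R
  obtain ⟨C1, h1⟩ := exists_bound_ball hfd.continuous R
  obtain ⟨C2, h2⟩ := exists_bound_ball hfd2.continuous R
  obtain ⟨C, hC, hC0, hC1, hC2⟩ : ∃ C, 0 ≤ C ∧ C0 ≤ C ∧ C1 ≤ C ∧ C2 ≤ C :=
    ⟨max 0 (max C0 (max C1 C2)), by simp, by simp, by simp, by simp⟩
  have hb : ∀ y : E3, ‖y‖ ≤ R → |φ y| ≤ C ∧ |rad1 φ y| ≤ C ∧ |rad2 φ y| ≤ C := fun y hy =>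
    ⟨(h0 y hy).trans hC0, (abs_rad1_le φ y).trans ((h1 y hy).trans hC1),
      (abs_rad2_le φ y).trans ((h2 y hy).trans hC2)⟩
  refine ⟨C + (1 + R) * C + (1 + R) ^ 2 * C, fun y hy hyR => ?_⟩
  have hR0 : 0 ≤ R := (norm_nonneg y).trans hyR
  have e1 : |radOp φ y| ≤ (1 + R) * C := by
    rw [radOp_eq, abs_mul, abs_of_nonneg (by positivity : (0:ℝ) ≤ 1 + ‖y‖)]
    gcongr
    exact (hb y hyR).2.1
  have e2 : |(1 + ‖y‖) ^ 2 * rad2 φ y| ≤ (1 + R) ^ 2 * C := by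
    rw [abs_mul, abs_of_nonneg (by positivity : (0:ℝ) ≤ (1 + ‖y‖) ^ 2)]
    gcongr
    exact (hb y hyR).2.2
  have p1 : 0 ≤ (1 + R) * C := by positivity
  have p2 : 0 ≤ (1 + R) ^ 2 * C := by positivity
  interval_cases k
  · have : |φ y| ≤ C := (hb y hyR).1
    simp only [Function.iterate_zero, id]
    linarith
  · simp only [Function.iterate_one]
    linarith
  · change |radOp (radOp φ) y| ≤ _
    rw [radOp_radOp hφ hy]
    linarith [abs_add_le ((1 + ‖y‖) ^ 2 * rad2 φ y) (radOp φ y)]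

lemma radOp_iter_eq_zero {φ : E3 → ℝ} {R : ℝ} (hR : tsupport φ ⊆ Metric.closedBall 0 R) (k : ℕ) :
    ∀ y : E3, R < ‖y‖ → radOp^[k] φ y = 0 := by
    intro y hy
    have hev : ∀ᶠ z in nhds y, R < ‖z‖ := (isOpen_lt continuous_const continuous_norm).mem_nhds hy
    have : ∀ j, ∀ᶠ z in nhds y, radOp^[j] φ z = 0 := by
      intro j
      induction j with
      | zero =>
        filter_upwards [hev] with z hz
        by_contra hne
        have := hR (subset_tsupport _ hne)
        rw [mem_closedBall_zero_iff] at this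
        linarith
      | succ j ih =>
        filter_upwards [ih.eventually_nhds] with z hz
        rw [Function.iterate_succ_apply', radOp_eq, rad1,
          Filter.EventuallyEq.fderiv_eq (f := fun _ => (0:ℝ)) hz]
        simp
    exact (this k).self_of_nhds

/-- For `k ≤ 2`, `(⟨r⟩∂_r)^k φ` is bounded on the complement of the origin and compactly
supported, and the origin is a null set. -/
lemma integrable_weight {φ : E3 → ℝ} (hφ : ContDiff ℝ ∞ φ) (hc : HasCompactSupport φ)
    (γ : ℝ) {k : ℕ} (hk : k ≤ 2) :
    Integrable fun y : E3 => (1 + ‖y‖) ^ (γ - 2) * (radOp^[k] φ y) ^ 2 := by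
  obtain ⟨R, hR⟩ := hc.isCompact.isBounded.subset_closedBall (0 : E3)
  obtain ⟨B, hB⟩ := exists_bound_radOp hφ R hk
  have hsupp := radOp_iter_eq_zero hR k
  have hmeas : Measurable (radOp^[k] φ) := by
    rcases k with _ | k
    · exact hφ.continuous.measurable
    · rw [Function.iterate_succ']; exact measurable_radOp _
  have hwc : Continuous fun y : E3 => (1 + ‖y‖) ^ (γ - 2) :=
    (by fun_prop : Continuous fun y : E3 => 1 + ‖y‖).rpow_const
      fun y => Or.inl (by positivity)
  have hInt : IntegrableOn (fun y : E3 => (1 + ‖y‖) ^ (γ - 2) * B ^ 2) (Metric.closedBall 0 R) :=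
    (hwc.mul continuous_const).continuousOn.integrableOn_compact (isCompact_closedBall _ _)
  have hInt2 := hInt.integrable_indicator Metric.isClosed_closedBall.measurableSet
  refine hInt2.mono' (hwc.measurable.mul (hmeas.pow_const 2)).aestronglyMeasurable ?_
  have hne : ∀ᵐ y : E3, y ≠ 0 := by
    simp [ae_iff]
  filter_upwards [hne] with y hy
  rw [Real.norm_of_nonneg (by positivity)]
  by_cases hyR : ‖y‖ ≤ R
  · rw [indicator_of_mem (by simpa using hyR)]
    refine mul_le_mul_of_nonneg_left ?_ (by positivity)
    rw [← sq_abs]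
    exact pow_le_pow_left₀ (abs_nonneg _) (hB y hy hyR) 2
  · rw [indicator_of_notMem (by simpa using hyR), hsupp y (not_le.1 hyR)]
    simp

/-! ### `L²` bounds on shells -/

/-- Cauchy–Schwarz, with upper bounds `A`, `B` for the two `L²` norms. -/
lemma cauchy_schwarz {α : Type*} [MeasurableSpace α] {μ : Measure α} {f g : α → ℝ≥0∞}
    (hf : AEMeasurable f μ) (hg : AEMeasurable g μ) {A B : ℝ≥0∞}
    (hA : ∫⁻ x, f x ^ 2 ∂μ ≤ A ^ 2) (hB : ∫⁻ x, g x ^ 2 ∂μ ≤ B ^ 2) :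
    ∫⁻ x, f x * g x ∂μ ≤ A * B := by
  have h := ENNReal.lintegral_mul_le_Lp_mul_Lq μ Real.HolderConjugate.two_two hf hg
  have key : ∀ x y : ℝ≥0∞, x ≤ y ^ 2 → x ^ (1 / 2 : ℝ) ≤ y := fun x y hxy => by
    refine (ENNReal.rpow_le_rpow hxy (by norm_num)).trans_eq ?_
    rw [← ENNReal.rpow_natCast, ← ENNReal.rpow_mul]
    norm_num
  simp only [ENNReal.rpow_two] at h
  exact h.trans (mul_le_mul' (key _ _ hA) (key _ _ hB))

/-- `f` is measurable with `L²(μ)` norm at most `N`. -/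
def L2le (μ : Measure E3) (f : E3 → ℝ≥0∞) (N : ℝ≥0∞) : Prop :=
  Measurable f ∧ ∫⁻ y, f y ^ 2 ∂μ ≤ N ^ 2

lemma L2le.add {μ : Measure E3} {f g : E3 → ℝ≥0∞} {M N : ℝ≥0∞} (hf : L2le μ f M)
    (hg : L2le μ g N) : L2le μ (fun y => f y + g y) (M + N) := by
  refine ⟨hf.1.add hg.1, ?_⟩
  have h : ∀ y, (f y + g y) ^ 2 = f y ^ 2 + 2 * (f y * g y) + g y ^ 2 := fun y => by ring
  simp_rw [h]
  rw [lintegral_add_right _ (hg.1.pow_const 2), lintegral_add_left (hf.1.pow_const 2),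
    lintegral_const_mul 2 (f := fun a => f a * g a) (hf.1.mul hg.1), add_sq, mul_assoc 2 M N]
  have := cauchy_schwarz hf.1.aemeasurable hg.1.aemeasurable hf.2 hg.2
  gcongr
  exacts [hf.2, hg.2]

lemma L2le.const_mul {μ : Measure E3} {f : E3 → ℝ≥0∞} {N : ℝ≥0∞} (hf : L2le μ f N)
    (c : ℝ≥0∞) : L2le μ (fun y => c * f y) (c * N) := by
  refine ⟨hf.1.const_mul c, ?_⟩
  simp_rw [mul_pow]
  rw [lintegral_const_mul _ (hf.1.pow_const 2)]
  gcongr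
  exact hf.2

lemma L2le.sum {μ : Measure E3} {f : RotIdx → E3 → ℝ≥0∞} {N : ℝ≥0∞}
    (hf : ∀ q, L2le μ (f q) N) : L2le μ (fun y => ∑ q, f q y) (3 * N) := by
  simp_rw [sum_rotIdx]
  rw [show 3 * N = N + N + N by ring]
  exact ((hf _).add (hf _)).add (hf _)

lemma L2le.mono_measure {μ ν : Measure E3} {f : E3 → ℝ≥0∞} {N : ℝ≥0∞} (hf : L2le μ f N)
    (h : ν ≤ μ) : L2le ν f N :=
  ⟨hf.1, (lintegral_mono' h le_rfl).trans hf.2⟩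

/-- Lebesgue measure on the spherical shell `{y : ‖y‖ ∈ I}`. -/
def shellMeas (I : Set ℝ) : Measure E3 := volume.restrict {y | ‖y‖ ∈ I}

lemma shellMeas_mono {I J : Set ℝ} (h : I ⊆ J) : shellMeas I ≤ shellMeas J :=
  Measure.restrict_mono (fun y (hy : ‖y‖ ∈ I) => (h hy : ‖y‖ ∈ J)) le_rfl

lemma measurable_comp_Phi (e : OrthonormalBasis (Fin 3) ℝ E3) {f : E3 → ℝ≥0∞}
    (hf : Measurable f) : Measurable fun z : ℝ × ℝ × ℝ => f (Phi e z.1 z.2) :=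
  hf.comp (continuous_Phi e).measurable

/-- An integral over radii `t ∈ I` and angles in `A t`, without the volume factor `t²`, is bounded
by the `L²` norm on the shell: Cauchy–Schwarz for the factors `t⁻¹` on `A t` and `t f`, the latter
having `L²` norm at most `2N` by `lintegral_spherical_le`. -/
lemma lintegral_shell_le (e : OrthonormalBasis (Fin 3) ℝ E3) {f : E3 → ℝ≥0∞} {I : Set ℝ}
    (hI : MeasurableSet I) (hpos : I ⊆ Ioi 0) {N : ℝ≥0∞} (hf : L2le (shellMeas I) f N)
    {A : ℝ → Set (ℝ × ℝ)} (hA : MeasurableSet {z : ℝ × ℝ × ℝ | z.2 ∈ A z.1})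
    (hAQ : ∀ t ∈ I, A t ⊆ Q 1) {K : ℝ≥0∞}
    (hK : ∫⁻ t in I, volume (A t) * ENNReal.ofReal (t ^ (-2 : ℝ)) ≤ K ^ 2) :
    ∫⁻ t in I, ∫⁻ p in A t, f (Phi e t p) ≤ 2 * K * N := by
  have hAt : ∀ t, MeasurableSet (A t) := fun t =>
    (by fun_prop : Measurable fun p : ℝ × ℝ => (t, p)) hA
  set S : Set (ℝ × ℝ × ℝ) := {z | z.2 ∈ A z.1} with hS
  have hQm : MeasurableSet (Q 1) := measurableSet_Ioo.prod measurableSet_Ioo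
  set μ : Measure (ℝ × ℝ × ℝ) := (volume.restrict I).prod (volume.restrict (Q 1))
  set g : ℝ × ℝ × ℝ → ℝ≥0∞ := S.indicator fun z => ENNReal.ofReal z.1⁻¹ with hg
  set k : ℝ × ℝ × ℝ → ℝ≥0∞ := fun z => ENNReal.ofReal z.1 * f (Phi e z.1 z.2) with hk
  have hgm : Measurable g := Measurable.indicator (by fun_prop) hA
  have hkm : Measurable k := Measurable.mul (by fun_prop) (measurable_comp_Phi e hf.1)
  have h1 : ∫⁻ z, g z ^ 2 ∂μ ≤ K ^ 2 := by
    rw [lintegral_prod _ (hgm.pow_const 2).aemeasurable]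
    refine le_trans (setLIntegral_mono' hI fun t ht => ?_) hK
    have ht0 : 0 < t := hpos ht
    have : ∀ p, g (t, p) ^ 2 = (A t).indicator (fun _ => ENNReal.ofReal (t ^ (-2 : ℝ))) p := by
      intro p
      by_cases hp : p ∈ A t
      · rw [hg, indicator_of_mem (by exact hp), indicator_of_mem hp, ← ENNReal.ofReal_pow
          (by positivity), Real.rpow_neg ht0.le]
        congr 1
        norm_num
      · rw [hg, indicator_of_notMem (by exact hp), indicator_of_notMem hp]
        simp
    simp_rw [this]
    refine (setLIntegral_le_lintegral _ _).trans ?_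
    rw [lintegral_indicator_const (hAt t), mul_comm]
  have h2 : ∫⁻ z, k z ^ 2 ∂μ ≤ (2 * N) ^ 2 := by
    rw [lintegral_prod_symm _ (hkm.pow_const 2).aemeasurable]
    set w : E3 → ℝ≥0∞ := {y : E3 | ‖y‖ ∈ I}.indicator fun y => f y ^ 2 with hw
    have hIm : MeasurableSet {y : E3 | ‖y‖ ∈ I} := measurable_norm hI
    have hwm : Measurable w := (hf.1.pow_const 2).indicator hIm
    have h3 := lintegral_spherical_le e hwm
    have h4 : ∫⁻ y, w y ≤ N ^ 2 := by
      rw [hw, lintegral_indicator hIm]; exact hf.2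
    refine le_trans (lintegral_mono fun p => ?_) (h3.trans ?_)
    · refine le_trans (setLIntegral_mono' hI fun t ht => ?_)
        (lintegral_mono_set (f := fun t => ENNReal.ofReal (t ^ 2) * w (Phi e t p)) hpos)
      have ht0 : 0 < t := hpos ht
      have : Phi e t p ∈ {y : E3 | ‖y‖ ∈ I} := by
        change ‖Phi e t p‖ ∈ I
        rwa [norm_Phi, abs_of_pos ht0]
      rw [hw, indicator_of_mem this, hk]
      simp only
      rw [mul_pow, ENNReal.ofReal_pow ht0.le]
    · rw [mul_pow]
      gcongr
      norm_num
  have h5 := cauchy_schwarz hgm.aemeasurable hkm.aemeasurable h1 h2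
  rw [lintegral_prod (fun z => g z * k z) (hgm.mul hkm).aemeasurable] at h5
  refine le_trans (setLIntegral_mono' hI fun t ht => ?_) (h5.trans_eq (by ring))
  have ht0 : 0 < t := hpos ht
  have : ∀ p, g (t, p) * k (t, p) = (A t).indicator (fun p => f (Phi e t p)) p := by
    intro p
    by_cases hp : p ∈ A t
    · rw [hg, indicator_of_mem (by exact hp), indicator_of_mem hp, hk]
      simp only
      rw [← mul_assoc, ← ENNReal.ofReal_mul (by positivity), inv_mul_cancel₀ ht0.ne']
      simp
    · rw [hg, indicator_of_notMem (by exact hp), indicator_of_notMem hp]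
      simp
  simp_rw [this]
  rw [lintegral_indicator (hAt t), Measure.restrict_restrict (hAt t),
    inter_eq_self_of_subset_left (hAQ t ht)]

lemma lintegral_rpow_neg_two {t : ℝ} (ht : 0 < t) :
    ∫⁻ s in Ioi t, ENNReal.ofReal (s ^ (-2 : ℝ)) = ENNReal.ofReal t⁻¹ := by
  rw [← ofReal_integral_eq_lintegral_ofReal
    (integrableOn_Ioi_rpow_of_lt (by norm_num) ht)
    ((ae_restrict_mem measurableSet_Ioi).mono fun s hs =>
      Real.rpow_nonneg (ht.trans hs).le _), integral_Ioi_rpow_of_lt (by norm_num) ht]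
  congr 1
  norm_num
  exact Real.rpow_neg_one t

lemma lintegral_rpow_zero_one {a : ℝ} (ha : -1 < a) :
    ∫⁻ s in Ioo (0:ℝ) 1, ENNReal.ofReal (s ^ a) = ENNReal.ofReal (a + 1)⁻¹ := by
  have h1 : IntegrableOn (fun s : ℝ => s ^ a) (Ioo 0 1) := by
    rw [← integrableOn_Ioc_iff_integrableOn_Ioo]
    exact (intervalIntegrable_iff_integrableOn_Ioc_of_le zero_le_one).1
      (intervalIntegral.intervalIntegrable_rpow' ha)
  rw [← ofReal_integral_eq_lintegral_ofReal h1
    ((ae_restrict_mem measurableSet_Ioo).mono fun s hs => Real.rpow_nonneg hs.1.le _),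
    ← integral_Ioc_eq_integral_Ioo, ← intervalIntegral.integral_of_le zero_le_one,
    integral_rpow (Or.inl ha)]
  congr 1
  rw [Real.zero_rpow (by linarith), Real.one_rpow]
  ring

/-- `lintegral_shell_le` for a set of angles not depending on the radius. -/
lemma lintegral_shell_const_le (e : OrthonormalBasis (Fin 3) ℝ E3) {f : E3 → ℝ≥0∞} {t T : ℝ}
    (ht : 0 < t) {N : ℝ≥0∞} (hf : L2le (shellMeas (Ioo t T)) f N)
    {A : Set (ℝ × ℝ)} (hA : MeasurableSet A) (hAQ : A ⊆ Q 1) {v : ℝ} (hv : 0 ≤ v)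
    (hAv : volume A ≤ ENNReal.ofReal v) :
    ∫⁻ s in Ioo t T, ∫⁻ p in A, f (Phi e s p) ≤ 2 * ENNReal.ofReal √(v / t) * N := by
  refine lintegral_shell_le e measurableSet_Ioo (fun s hs => ht.trans hs.1) hf
    (A := fun _ => A) (measurable_snd hA) (fun _ _ => hAQ) ?_
  rw [lintegral_const_mul _ (by fun_prop), ← ENNReal.ofReal_pow (by positivity),
    Real.sq_sqrt (by positivity), div_eq_mul_inv, ENNReal.ofReal_mul hv,
    ← lintegral_rpow_neg_two ht]
  gcongr
  exact Ioo_subset_Ioi_self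

lemma lintegral_shell_const_le_swap (e : OrthonormalBasis (Fin 3) ℝ E3) {f : E3 → ℝ≥0∞} {t T : ℝ}
    (ht : 0 < t) {N : ℝ≥0∞} (hf : L2le (shellMeas (Ioo t T)) f N)
    {A : Set (ℝ × ℝ)} (hA : MeasurableSet A) (hAQ : A ⊆ Q 1) {v : ℝ} (hv : 0 ≤ v)
    (hAv : volume A ≤ ENNReal.ofReal v) :
    ∫⁻ p in A, ∫⁻ s in Ioo t T, f (Phi e s p) ≤ 2 * ENNReal.ofReal √(v / t) * N := by
  rw [lintegral_lintegral_swap (f := fun p s => f (Phi e s p))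
    ((measurable_comp_Phi e hf.1).comp measurable_swap).aemeasurable]
  exact lintegral_shell_const_le e ht hf hA hAQ hv hAv

lemma measurableSet_Q (δ : ℝ) : MeasurableSet (Q δ) := measurableSet_Ioo.prod measurableSet_Ioo

lemma Q_mono {δ ε : ℝ} (h : δ ≤ ε) : Q δ ⊆ Q ε :=
  prod_mono (Ioo_subset_Ioo_right h) (Ioo_subset_Ioo_right h)

lemma volume_Q {δ : ℝ} (hδ : 0 ≤ δ) : volume (Q δ) = ENNReal.ofReal (δ ^ 2) := by
  rw [Q, Measure.volume_eq_prod, Measure.prod_prod, Real.volume_Ioo, sub_zero,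
    ← ENNReal.ofReal_mul hδ, sq]

/-- On a shell where the weight `(1 + s)^(γ - 2)` is at least `c⁻²`, the weighted `L²` norm
controls the unweighted one. -/
lemma L2le_of_weight {f : E3 → ℝ≥0∞} (hf : Measurable f) {γ : ℝ} {M : ℝ≥0∞}
    (h : ∫⁻ y, ENNReal.ofReal ((1 + ‖y‖) ^ (γ - 2)) * f y ^ 2 ≤ M ^ 2) {I : Set ℝ}
    (hI : MeasurableSet I) {c : ℝ} (hc : 0 ≤ c)
    (hw : ∀ s ∈ I, 0 ≤ s → 1 ≤ c ^ 2 * (1 + s) ^ (γ - 2)) :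
    L2le (shellMeas I) f (ENNReal.ofReal c * M) := by
  refine ⟨hf, ?_⟩
  have hIm : MeasurableSet {y : E3 | ‖y‖ ∈ I} := measurable_norm hI
  calc ∫⁻ y, f y ^ 2 ∂shellMeas I
      ≤ ∫⁻ y in {y : E3 | ‖y‖ ∈ I}, ENNReal.ofReal c ^ 2 *
          (ENNReal.ofReal ((1 + ‖y‖) ^ (γ - 2)) * f y ^ 2) := by
        refine setLIntegral_mono' hIm fun y hy => ?_
        rw [← mul_assoc, ← ENNReal.ofReal_pow hc, ← ENNReal.ofReal_mul (by positivity)]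
        exact le_mul_of_one_le_left' (ENNReal.one_le_ofReal.2 (hw _ hy (norm_nonneg y)))
    _ ≤ ∫⁻ y, ENNReal.ofReal c ^ 2 * (ENNReal.ofReal ((1 + ‖y‖) ^ (γ - 2)) * f y ^ 2) :=
        setLIntegral_le_lintegral _ _
    _ ≤ (ENNReal.ofReal c * M) ^ 2 := by
        rw [lintegral_const_mul' _ _ (by finiteness), mul_pow]
        gcongr

/-! ### Averaging along rays and radial derivatives on spheres -/

lemma rad1_Phi (φ : E3 → ℝ) (e : OrthonormalBasis (Fin 3) ℝ E3) (p : ℝ × ℝ) {s : ℝ} (hs : 0 < s) :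
    rad1 φ (Phi e s p) = fderiv ℝ φ (Phi e s p) (Phi e 1 p) := by
  rw [rad1, norm_Phi, abs_of_pos hs]
  congr 1
  rw [Phi_eq_smul e s, inv_smul_smul₀ hs.ne']

lemma rad2_Phi (φ : E3 → ℝ) (e : OrthonormalBasis (Fin 3) ℝ E3) (p : ℝ × ℝ) {s : ℝ} (hs : 0 < s) :
    rad2 φ (Phi e s p) = fderiv ℝ (fderiv ℝ φ) (Phi e s p) (Phi e 1 p) (Phi e 1 p) := by
  have : ‖Phi e s p‖⁻¹ • Phi e s p = Phi e 1 p := by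
    rw [norm_Phi, abs_of_pos hs, Phi_eq_smul e s, inv_smul_smul₀ hs.ne']
  rw [rad2, this]

lemma hasDerivAt_Phi (e : OrthonormalBasis (Fin 3) ℝ E3) (p : ℝ × ℝ) (s : ℝ) :
    HasDerivAt (fun s => Phi e s p) (Phi e 1 p) s := by
  rw [show (fun s => Phi e s p) = fun s => s • Phi e 1 p from funext fun s => Phi_eq_smul e s p]
  simpa using (hasDerivAt_id s).smul_const (Phi e 1 p)

lemma continuous_ray (e : OrthonormalBasis (Fin 3) ℝ E3) (p : ℝ × ℝ) :
    Continuous fun s => Phi e s p :=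
  (continuous_Phi e).comp (by fun_prop : Continuous fun s : ℝ => (s, p))

lemma smooth_fderiv {φ : E3 → ℝ} (hφ : ContDiff ℝ ∞ φ) : ContDiff ℝ ∞ (fderiv ℝ φ) :=
  hφ.fderiv_right (by simp)

lemma continuous_fderiv_ray {φ : E3 → ℝ} (hφ : ContDiff ℝ ∞ φ)
    (e : OrthonormalBasis (Fin 3) ℝ E3) (p : ℝ × ℝ) :
    Continuous fun s => fderiv ℝ φ (Phi e s p) (Phi e 1 p) :=
  ((smooth_fderiv hφ).continuous.comp (continuous_ray e p)).clm_apply continuous_const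

lemma enorm_le_add_ray {φ : E3 → ℝ} (hφ : ContDiff ℝ ∞ φ) (e : OrthonormalBasis (Fin 3) ℝ E3)
    (p : ℝ × ℝ) {α β : ℝ} (hα : 0 < α) (hαβ : α ≤ β) :
    ‖φ (Phi e α p)‖ₑ ≤ ‖φ (Phi e β p)‖ₑ + ∫⁻ s in Ioo α β, ‖rad1 φ (Phi e s p)‖ₑ := by
  refine (enorm_le_add_lintegral (fun s => hasDerivAt_comp_curve hφ (hasDerivAt_Phi e p s))
    (continuous_fderiv_ray hφ e p) (left_mem_Icc.2 hαβ) (right_mem_Icc.2 hαβ)).trans_eq ?_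
  congr 1
  exact setLIntegral_congr_fun measurableSet_Ioo fun s hs => by
    simp only [rad1_Phi φ e p (hα.trans hs.1)]

lemma enorm_le_ray {φ : E3 → ℝ} (hφ : ContDiff ℝ ∞ φ) (e : OrthonormalBasis (Fin 3) ℝ E3)
    (p : ℝ × ℝ) {α β : ℝ} (hα : 0 < α) (hαβ : α < β) :
    ‖φ (Phi e α p)‖ₑ ≤ ∫⁻ s in Ioo α β, (ENNReal.ofReal (β - α)⁻¹ * ‖φ (Phi e s p)‖ₑ +
      ‖rad1 φ (Phi e s p)‖ₑ) := by
  refine (enorm_le_lintegral (fun s => hasDerivAt_comp_curve hφ (hasDerivAt_Phi e p s))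
    (continuous_fderiv_ray hφ e p) hαβ (left_mem_Icc.2 hαβ.le)).trans_eq ?_
  exact setLIntegral_congr_fun measurableSet_Ioo fun s hs => by
    simp only [rad1_Phi φ e p (hα.trans hs.1)]

lemma enorm_rad1_le_ray {φ : E3 → ℝ} (hφ : ContDiff ℝ ∞ φ) (e : OrthonormalBasis (Fin 3) ℝ E3)
    (p : ℝ × ℝ) {α β : ℝ} (hα : 0 < α) (hαβ : α < β) :
    ‖rad1 φ (Phi e α p)‖ₑ ≤ ∫⁻ s in Ioo α β, (ENNReal.ofReal (β - α)⁻¹ * ‖rad1 φ (Phi e s p)‖ₑ +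
      ‖rad2 φ (Phi e s p)‖ₑ) := by
  have hf := smooth_fderiv hφ
  have hd : ∀ s, HasDerivAt (fun s => fderiv ℝ φ (Phi e s p) (Phi e 1 p))
      (fderiv ℝ (fderiv ℝ φ) (Phi e s p) (Phi e 1 p) (Phi e 1 p)) s := fun s => by
    have h1 : HasDerivAt (fun s => fderiv ℝ φ (Phi e s p))
        (fderiv ℝ (fderiv ℝ φ) (Phi e s p) (Phi e 1 p)) s :=
      ((hf.differentiable (by simp)).differentiableAt.hasFDerivAt).comp_hasDerivAt s
        (hasDerivAt_Phi e p s)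
    simpa using h1.clm_apply (hasDerivAt_const s (Phi e 1 p))
  have hcont : Continuous fun s =>
      fderiv ℝ (fderiv ℝ φ) (Phi e s p) (Phi e 1 p) (Phi e 1 p) :=
    (((hf.fderiv_right (m := ∞) (by simp)).continuous.comp (continuous_ray e p)).clm_apply
      continuous_const).clm_apply continuous_const
  rw [rad1_Phi φ e p hα]
  refine (enorm_le_lintegral hd hcont hαβ (left_mem_Icc.2 hαβ.le)).trans_eq ?_
  exact setLIntegral_congr_fun measurableSet_Ioo fun s hs => by
    simp only [rad1_Phi φ e p (hα.trans hs.1), rad2_Phi φ e p (hα.trans hs.1)]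

/-- `∑ |∂_r Ω_q φ|`, the sum over the three rotation fields. -/
def radRot1 (φ : E3 → ℝ) (y : E3) : ℝ≥0∞ := ∑ q, ‖rad1 (rotOp q φ) y‖ₑ

/-- `∑ |∂_r Ω_p Ω_q φ|`, the sum over all words of length two. -/
def radRot2 (φ : E3 → ℝ) (y : E3) : ℝ≥0∞ := ∑ q, radRot1 (rotOp q φ) y

lemma measurable_radRot1 (φ : E3 → ℝ) : Measurable (radRot1 φ) :=
  Finset.measurable_sum _ fun _ _ => (measurable_rad1 _).enorm

lemma measurable_radRot2 (φ : E3 → ℝ) : Measurable (radRot2 φ) :=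
  Finset.measurable_sum _ fun _ _ => measurable_radRot1 _

lemma enorm_euler (φ : E3 → ℝ) (y : E3) : ‖euler φ y‖ₑ = ENNReal.ofReal ‖y‖ * ‖rad1 φ y‖ₑ := by
  rw [euler_eq, enorm_mul, Real.enorm_of_nonneg (norm_nonneg y)]

lemma rot1_euler {φ : E3 → ℝ} (hφ : ContDiff ℝ ∞ φ) (y : E3) :
    rot1 (euler φ) y = ENNReal.ofReal ‖y‖ * radRot1 φ y := by
  simp_rw [rot1, radRot1, rotOp_euler hφ, enorm_euler, Finset.mul_sum]

lemma rot2_euler {φ : E3 → ℝ} (hφ : ContDiff ℝ ∞ φ) (y : E3) :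
    rot2 (euler φ) y = ENNReal.ofReal ‖y‖ * radRot2 φ y := by
  simp_rw [rot2, radRot2, rotOp_euler hφ, rot1_euler (rotOp_smooth _ hφ), Finset.mul_sum]

/-- Since `‖y‖ ∂_r` commutes with rotations and `‖y‖` is constant on the sphere, the spherical
estimate `enorm_le_lintegral_Q` holds for `∂_rφ` although this function is singular at `0`. -/
lemma enorm_rad1_le_Q {φ : E3 → ℝ} (hφ : ContDiff ℝ ∞ φ) (e : OrthonormalBasis (Fin 3) ℝ E3)
    {t δ : ℝ} (ht : 0 < t) (hδ : 0 < δ) :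
    ‖rad1 φ (Phi e t (0, 0))‖ₑ ≤ ∫⁻ p in Q δ, (ENNReal.ofReal δ⁻¹ ^ 2 * ‖rad1 φ (Phi e t p)‖ₑ +
      4 * ENNReal.ofReal δ⁻¹ * radRot1 φ (Phi e t p) + 4 * radRot2 φ (Phi e t p)) := by
  have h := enorm_le_lintegral_Q (linOp_smooth (ContinuousLinearMap.id ℝ E3) hφ) e t hδ
  rw [enorm_euler] at h
  simp_rw [enorm_euler, rot1_euler hφ, rot2_euler hφ, norm_Phi, abs_of_pos ht] at h
  refine (ENNReal.mul_le_mul_iff_right (a := ENNReal.ofReal t) (by simpa using ht)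
    (by finiteness)).1 (h.trans_eq ?_)
  rw [← lintegral_const_mul' _ _ (by finiteness)]
  exact lintegral_congr fun p => by ring

lemma enorm_rad1_le_fst {φ : E3 → ℝ} (hφ : ContDiff ℝ ∞ φ) (e : OrthonormalBasis (Fin 3) ℝ E3)
    {t : ℝ} (ht : 0 < t) {a b : ℝ} (ha : a ∈ Icc (0:ℝ) 1) :
    ‖rad1 φ (Phi e t (a, b))‖ₑ ≤ ∫⁻ s in Ioo (0:ℝ) 1, (‖rad1 φ (Phi e t (s, b))‖ₑ +
      2 * radRot1 φ (Phi e t (s, b))) := by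
  have h := enorm_le_lintegral_fst (linOp_smooth (ContinuousLinearMap.id ℝ E3) hφ) e t b
    one_pos ha
  replace h := h.trans (lintegral_mono fun s => add_le_add_right
    (enorm_linOp_rotGen_le (e.norm_eq_one 0) (e.norm_eq_one 1) _ _) _)
  rw [enorm_euler] at h
  simp_rw [enorm_euler, rot1_euler hφ, norm_Phi, abs_of_pos ht] at h
  refine (ENNReal.mul_le_mul_iff_right (a := ENNReal.ofReal t) (by simpa using ht)
    (by finiteness)).1 (h.trans_eq ?_)
  rw [← lintegral_const_mul' _ _ (by finiteness)]
  refine lintegral_congr fun p => ?_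
  simp only [inv_one, ENNReal.ofReal_one, one_mul]
  ring

/-! ### Far from the origin -/

/-- The weighted `L²` norms on the right-hand side with at most two radial derivatives are
bounded by `M`. -/
def WeightedBound (γ : ℝ) (ψ : E3 → ℝ) (M : ℝ≥0∞) : Prop :=
  ∀ (l : List RotIdx) (k : ℕ), k ≤ 2 → k + l.length ≤ 3 →
    ∫⁻ y, ENNReal.ofReal ((1 + ‖y‖) ^ (γ - 2)) * ‖radOp^[k] (l.foldr rotOp ψ) y‖ₑ ^ 2 ≤ M ^ 2

lemma smooth_foldr {ψ : E3 → ℝ} (hψ : ContDiff ℝ ∞ ψ) (l : List RotIdx) :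
    ContDiff ℝ ∞ (l.foldr rotOp ψ) := by
  induction l with
  | nil => exact hψ
  | cons q l ih => exact rotOp_smooth q ih

lemma measurable_radOp_iter {φ : E3 → ℝ} (hφ : ContDiff ℝ ∞ φ) (k : ℕ) :
    Measurable (radOp^[k] φ) := by
  rcases k with _ | k
  · exact hφ.continuous.measurable
  · rw [Function.iterate_succ']; exact measurable_radOp _

lemma WeightedBound.l2le {γ : ℝ} {ψ : E3 → ℝ} {M : ℝ≥0∞} (h : WeightedBound γ ψ M)
    (hψ : ContDiff ℝ ∞ ψ) {I : Set ℝ} (hI : MeasurableSet I) {c : ℝ} (hc : 0 ≤ c)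
    (hw : ∀ s ∈ I, 0 ≤ s → 1 ≤ c ^ 2 * (1 + s) ^ (γ - 2)) (l : List RotIdx) (k : ℕ) (hk : k ≤ 2)
    (hkl : k + l.length ≤ 3) :
    L2le (shellMeas I) (fun y => ‖radOp^[k] (l.foldr rotOp ψ) y‖ₑ) (ENNReal.ofReal c * M) :=
  L2le_of_weight (measurable_radOp_iter (smooth_foldr hψ l) k).enorm (h l k hk hkl) hI hc hw

/-- `|φ| + |⟨r⟩∂_rφ|` -/
def jet (φ : E3 → ℝ) (y : E3) : ℝ≥0∞ := ‖φ y‖ₑ + ‖radOp φ y‖ₑ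

/-- Sum of `jet` over all rotation words of length at most two, with the weights of
`enorm_le_lintegral_Q`. -/
def jetRot (φ : E3 → ℝ) (y : E3) : ℝ≥0∞ :=
  jet φ y + 4 * ∑ q, jet (rotOp q φ) y + 4 * ∑ q, ∑ q', jet (rotOp q' (rotOp q φ)) y

lemma measurable_jet {φ : E3 → ℝ} (hφ : ContDiff ℝ ∞ φ) : Measurable (jet φ) :=
  hφ.continuous.measurable.enorm.add (measurable_radOp φ).enorm

/-- Far from the origin: averaging over the dyadic shell `r < ‖y‖ < 2r`. -/
lemma far_bound {γ : ℝ} (hγ1 : 1 < γ) {ψ : E3 → ℝ} {M : ℝ≥0∞} (h : WeightedBound γ ψ M)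
    (hψ : ContDiff ℝ ∞ ψ) (e : OrthonormalBasis (Fin 3) ℝ E3) {r : ℝ} (hr : 1 ≤ r) :
    ‖ψ (Phi e r (0, 0))‖ₑ ≤ 1568 * ENNReal.ofReal ((1 + r) ^ (-(γ + 1) / 2)) * M := by
  have hr0 : 0 < r := by linarith
  set c : ℝ := 2 * (1 + r) ^ ((2 - γ) / 2) with hc
  have hc0 : 0 ≤ c := by positivity
  have hw : ∀ s ∈ Ioo r (2 * r), 0 ≤ s → 1 ≤ c ^ 2 * (1 + s) ^ (γ - 2) := by
    intro s hs hs0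
    have e1 : c ^ 2 = 4 * (1 + r) ^ (2 - γ) := by
      rw [hc, mul_pow, ← Real.rpow_mul_natCast (by positivity)]
      norm_num
    have e2 : (1 + r) ^ (2 - γ) * (1 + s) ^ (γ - 2) = ((1 + r) / (1 + s)) ^ (2 - γ) := by
      rw [Real.div_rpow (by positivity) (by positivity), div_eq_mul_inv,
        ← Real.rpow_neg (by positivity), neg_sub]
    rw [e1, mul_assoc, e2]
    have h2 : (1 + r) / (1 + s) ≤ 1 := by
      rw [div_le_one (by positivity)]; linarith [hs.1]
    have h3 : 1 / 2 ≤ (1 + r) / (1 + s) := by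
      rw [le_div_iff₀ (by positivity)]; linarith [hs.2]
    have h4 : (1 + r) / (1 + s) ≤ ((1 + r) / (1 + s)) ^ (2 - γ) := by
      simpa using Real.rpow_le_rpow_of_exponent_ge (by positivity) h2
        (by linarith : 2 - γ ≤ 1)
    linarith
  set N := ENNReal.ofReal c * M with hN
  have hL := h.l2le hψ (measurableSet_Ioo (a := r) (b := 2 * r)) hc0 hw
  have hJ : L2le (shellMeas (Ioo r (2 * r))) (jetRot ψ) (98 * N) := by
    have j0 : L2le (shellMeas (Ioo r (2 * r))) (jet ψ) (N + N) :=
      (hL [] 0 (by norm_num) (by simp)).add (hL [] 1 (by norm_num) (by simp))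
    have j1 : ∀ q, L2le (shellMeas (Ioo r (2 * r))) (jet (rotOp q ψ)) (N + N) := fun q =>
      (hL [q] 0 (by norm_num) (by simp)).add (hL [q] 1 (by norm_num) (by simp))
    have j2 : ∀ q q', L2le (shellMeas (Ioo r (2 * r))) (jet (rotOp q' (rotOp q ψ))) (N + N) :=
      fun q q' => (hL [q', q] 0 (by norm_num) (by simp)).add
        (hL [q', q] 1 (by norm_num) (by simp))
    have := (j0.add ((L2le.sum j1).const_mul 4)).add
      ((L2le.sum fun q => L2le.sum (j2 q)).const_mul 4)
    rwa [show N + N + 4 * (3 * (N + N)) + 4 * (3 * (3 * (N + N))) = 98 * N by ring] at this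
  have hvol : volume (Q 1) ≤ ENNReal.ofReal 1 := by
    rw [volume_Q zero_le_one, one_pow]
  have hS := lintegral_shell_const_le e hr0 hJ (measurableSet_Q 1) le_rfl zero_le_one hvol
  have hpt : ∀ t ∈ Ioo r (2 * r), ENNReal.ofReal (2 * r - r)⁻¹ * ‖ψ (Phi e t (0, 0))‖ₑ +
      ‖rad1 ψ (Phi e t (0, 0))‖ₑ ≤
      ENNReal.ofReal r⁻¹ * ∫⁻ p in Q 1, jetRot ψ (Phi e t p) := by
    intro t ht
    have ht0 : 0 < t := hr0.trans ht.1
    have a1 := enorm_le_lintegral_Q hψ e t one_pos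
    have a2 := enorm_rad1_le_Q hψ e ht0 one_pos
    have a3 : ∀ (φ : E3 → ℝ) p, ‖rad1 φ (Phi e t p)‖ₑ ≤
        ENNReal.ofReal r⁻¹ * ‖radOp φ (Phi e t p)‖ₑ := by
      intro φ p
      rw [radOp_eq, enorm_mul, ← mul_assoc, norm_Phi, abs_of_pos ht0,
        Real.enorm_of_nonneg (by positivity : (0:ℝ) ≤ 1 + t),
        ← ENNReal.ofReal_mul (by positivity)]
      refine le_mul_of_one_le_left' (ENNReal.one_le_ofReal.2 ?_)
      rw [inv_mul_eq_div, one_le_div hr0]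
      linarith [ht.1]
    rw [show 2 * r - r = r by ring]
    refine (add_le_add (mul_le_mul_right a1 _) a2).trans ?_
    rw [← lintegral_const_mul' _ _ (by finiteness), ← lintegral_add_left,
      ← lintegral_const_mul' _ _ (by finiteness)]
    · refine lintegral_mono fun p => ?_
      have b1 : radRot1 ψ (Phi e t p) ≤
          ENNReal.ofReal r⁻¹ * ∑ q, ‖radOp (rotOp q ψ) (Phi e t p)‖ₑ := by
        rw [Finset.mul_sum]
        exact Finset.sum_le_sum fun q _ => a3 _ _
      have b2 : radRot2 ψ (Phi e t p) ≤
          ENNReal.ofReal r⁻¹ * ∑ q, ∑ q', ‖radOp (rotOp q' (rotOp q ψ)) (Phi e t p)‖ₑ := by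
        simp_rw [Finset.mul_sum]
        exact Finset.sum_le_sum fun q _ => Finset.sum_le_sum fun q' _ => a3 _ _
      simp only [jetRot, jet, rot1, rot2, inv_one, ENNReal.ofReal_one, one_pow, one_mul, mul_one,
        Finset.sum_add_distrib]
      refine (add_le_add_right (add_le_add (add_le_add (a3 ψ p) (mul_le_mul_right b1 4))
        (mul_le_mul_right b2 4)) _).trans_eq ?_
      ring
    · have m0 : Measurable fun p => ‖ψ (Phi e t p)‖ₑ :=
        (hψ.continuous.measurable.comp (measurable_Phi e t)).enorm
      have m1 : Measurable fun p => rot1 ψ (Phi e t p) :=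
        (measurable_rot1 hψ).comp (measurable_Phi e t)
      have m2 : Measurable fun p => rot2 ψ (Phi e t p) :=
        (measurable_rot2 hψ).comp (measurable_Phi e t)
      fun_prop
  have hfin := (enorm_le_ray hψ e (0, 0) hr0 (by linarith : r < 2 * r)).trans
    (setLIntegral_mono' measurableSet_Ioo hpt)
  rw [lintegral_const_mul' _ _ (by finiteness)] at hfin
  refine hfin.trans ((mul_le_mul_right hS _).trans ?_)
  have hreal : r⁻¹ * √(1 / r) * c ≤ 8 * (1 + r) ^ (-(γ + 1) / 2) := by
    have e1 : r⁻¹ ≤ 2 * (1 + r) ^ (-1 : ℝ) := by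
      rw [Real.rpow_neg_one, ← div_eq_mul_inv, inv_eq_one_div, div_le_div_iff₀ hr0 (by positivity)]
      linarith
    have e2 : √(1 / r) ≤ 2 * (1 + r) ^ (-1 / 2 : ℝ) := by
      rw [show (2:ℝ) * (1 + r) ^ (-1 / 2 : ℝ) = √(4 / (1 + r)) by
        rw [Real.sqrt_div (by norm_num), show (4:ℝ) = 2 ^ 2 by norm_num,
          Real.sqrt_sq (by norm_num), neg_div, Real.rpow_neg (by positivity),
          ← Real.sqrt_eq_rpow, div_eq_mul_inv]]
      apply Real.sqrt_le_sqrt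
      rw [div_le_div_iff₀ hr0 (by positivity)]
      linarith
    calc r⁻¹ * √(1 / r) * c
        ≤ (2 * (1 + r) ^ (-1 : ℝ)) * (2 * (1 + r) ^ (-1 / 2 : ℝ)) * c := by gcongr
      _ = 8 * ((1 + r) ^ (-1 : ℝ) * (1 + r) ^ (-1 / 2 : ℝ) * (1 + r) ^ ((2 - γ) / 2)) := by
          rw [hc]; ring
      _ = 8 * (1 + r) ^ (-(γ + 1) / 2) := by
          rw [← Real.rpow_add (by positivity), ← Real.rpow_add (by positivity)]
          congr 2
          ring
  calc ENNReal.ofReal r⁻¹ * (2 * ENNReal.ofReal √(1 / r) * (98 * N))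
      = 196 * (ENNReal.ofReal r⁻¹ * ENNReal.ofReal √(1 / r) * ENNReal.ofReal c) * M := by
        rw [hN]; ring
    _ = 196 * ENNReal.ofReal (r⁻¹ * √(1 / r) * c) * M := by
        rw [ENNReal.ofReal_mul (p := r⁻¹ * √(1 / r)) (by positivity),
          ENNReal.ofReal_mul (p := r⁻¹) (by positivity)]
    _ ≤ 196 * ENNReal.ofReal (8 * (1 + r) ^ (-(γ + 1) / 2)) * M := by gcongr
    _ = 1568 * ENNReal.ofReal ((1 + r) ^ (-(γ + 1) / 2)) * M := by
        rw [ENNReal.ofReal_mul (by norm_num), ENNReal.ofReal_ofNat]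
        ring

/-! ### Near the origin -/

/-- `2|⟨r⟩∂_rφ| + |(⟨r⟩∂_r)²φ|`, which dominates `|∂_rφ| + |∂_r²φ|`. -/
def radJet (φ : E3 → ℝ) (y : E3) : ℝ≥0∞ := 2 * ‖radOp φ y‖ₑ + ‖radOp (radOp φ) y‖ₑ

lemma measurable_radJet (φ : E3 → ℝ) : Measurable (radJet φ) :=
  ((measurable_radOp φ).enorm.const_mul 2).add (measurable_radOp _).enorm

lemma enorm_rad1_le_radJet {φ : E3 → ℝ} (hφ : ContDiff ℝ ∞ φ) (e : OrthonormalBasis (Fin 3) ℝ E3)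
    (p : ℝ × ℝ) {t : ℝ} (ht : 0 < t) (ht1 : t ≤ 1) :
    ‖rad1 φ (Phi e t p)‖ₑ ≤ ∫⁻ s in Ioo t 2, radJet φ (Phi e s p) := by
  refine (enorm_rad1_le_ray hφ e p ht (by linarith : t < 2)).trans
    (setLIntegral_mono' measurableSet_Ioo fun s hs => ?_)
  have hs0 : 0 < s := ht.trans hs.1
  have hy : Phi e s p ≠ 0 := norm_pos_iff.1 (by rwa [norm_Phi, abs_of_pos hs0])
  have h1 : ENNReal.ofReal (2 - t)⁻¹ ≤ 1 := by
    rw [ENNReal.ofReal_le_one]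
    exact inv_le_one_of_one_le₀ (by linarith)
  calc ENNReal.ofReal (2 - t)⁻¹ * ‖rad1 φ (Phi e s p)‖ₑ + ‖rad2 φ (Phi e s p)‖ₑ
      ≤ 1 * ‖radOp φ (Phi e s p)‖ₑ +
          (‖radOp φ (Phi e s p)‖ₑ + ‖radOp (radOp φ) (Phi e s p)‖ₑ) :=
        add_le_add (mul_le_mul' h1 (enorm_rad1_le _ _)) (enorm_rad2_le hφ hy)
    _ = radJet φ (Phi e s p) := by rw [radJet]; ring

/-- Integral over a small spherical square of the radial derivatives of the first rotations. -/
lemma near_rot1 {ψ : E3 → ℝ} (hψ : ContDiff ℝ ∞ ψ) (e : OrthonormalBasis (Fin 3) ℝ E3)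
    {N : ℝ≥0∞} (hN : ∀ q, L2le (shellMeas (Ioo 0 2)) (radJet (rotOp q ψ)) N)
    {t δ : ℝ} (ht : 0 < t) (ht1 : t ≤ 1) (hδ : 0 < δ) (hδ1 : δ ≤ 1) :
    ∫⁻ p in Q δ, radRot1 ψ (Phi e t p) ≤ 6 * ENNReal.ofReal √(δ ^ 2 / t) * N := by
  have hsum := (L2le.sum hN).mono_measure (shellMeas_mono (Ioo_subset_Ioo_left ht.le))
  have := lintegral_shell_const_le_swap e ht hsum (measurableSet_Q δ) (Q_mono hδ1)
    (sq_nonneg δ) (volume_Q hδ.le).le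
  refine le_trans (lintegral_mono fun p => ?_) (this.trans_eq (by ring))
  have m0 : ∀ φ, Measurable fun s => radJet φ (Phi e s p) := fun φ =>
    (measurable_radJet φ).comp (continuous_ray e p).measurable
  rw [lintegral_finsetSum _ fun q _ => m0 _]
  exact Finset.sum_le_sum fun q _ => enorm_rad1_le_radJet (rotOp_smooth q hψ) e p ht ht1

/-- Integral over a small spherical square of the radial derivative: enlarging the first
angular interval to unit length, at the cost of one rotation, gains a factor `√δ` over a direct use
of Cauchy–Schwarz on `Q δ`. -/
lemma near_rot0 {ψ : E3 → ℝ} (hψ : ContDiff ℝ ∞ ψ) (e : OrthonormalBasis (Fin 3) ℝ E3)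
    {N : ℝ≥0∞} (hN0 : L2le (shellMeas (Ioo 0 2)) (radJet ψ) N)
    (hN : ∀ q, L2le (shellMeas (Ioo 0 2)) (radJet (rotOp q ψ)) N)
    {t δ : ℝ} (ht : 0 < t) (ht1 : t ≤ 1) (hδ : 0 < δ) (hδ1 : δ ≤ 1) :
    ∫⁻ p in Q δ, ‖rad1 ψ (Phi e t p)‖ₑ ≤
      14 * (ENNReal.ofReal δ * ENNReal.ofReal √(δ / t)) * N := by
  set G : E3 → ℝ≥0∞ := fun y => ‖rad1 ψ y‖ₑ + 2 * radRot1 ψ y with hG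
  have hGm : Measurable G :=
    (measurable_rad1 ψ).enorm.add ((measurable_radRot1 ψ).const_mul 2)
  have hGP : Measurable fun p => G (Phi e t p) := hGm.comp (measurable_Phi e t)
  have hPm : Measurable fun p => ‖rad1 ψ (Phi e t p)‖ₑ :=
    ((measurable_rad1 ψ).comp (measurable_Phi e t)).enorm
  set A : Set (ℝ × ℝ) := Ioo 0 1 ×ˢ Ioo 0 δ with hA
  have hAm : MeasurableSet A := measurableSet_Ioo.prod measurableSet_Ioo
  have hAQ : A ⊆ Q 1 := prod_mono le_rfl (Ioo_subset_Ioo_right hδ1)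
  have hAv : volume A ≤ ENNReal.ofReal δ := by
    rw [hA, Measure.volume_eq_prod, Measure.prod_prod, Real.volume_Ioo, Real.volume_Ioo]
    simp
  have hsum := (hN0.add ((L2le.sum hN).const_mul 2)).mono_measure
    (shellMeas_mono (Ioo_subset_Ioo_left ht.le))
  have h2 := lintegral_shell_const_le_swap e ht hsum hAm hAQ hδ.le hAv
  have h1 : ∫⁻ p in Q δ, ‖rad1 ψ (Phi e t p)‖ₑ ≤
      ENNReal.ofReal δ * ∫⁻ p in A, G (Phi e t p) := by
    have hr : ∀ s r : ℝ, (volume : Measure (ℝ × ℝ)).restrict (Ioo 0 s ×ˢ Ioo 0 r) =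
        (volume.restrict (Ioo 0 s)).prod (volume.restrict (Ioo 0 r)) := fun s r => by
      rw [Measure.volume_eq_prod, Measure.prod_restrict]
    rw [Q, hA, hr, hr, lintegral_prod_symm _ hGP.aemeasurable,
      lintegral_prod _ hPm.aemeasurable]
    refine (setLIntegral_mono' measurableSet_Ioo fun a ha => lintegral_mono fun b =>
      enorm_rad1_le_fst hψ e ht ⟨ha.1.le, ha.2.le.trans hδ1⟩).trans_eq ?_
    rw [setLIntegral_const, Real.volume_Ioo, sub_zero, mul_comm]
  refine h1.trans ((mul_le_mul_right (le_trans (lintegral_mono fun p => ?_) h2) _).trans_eq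
    (by ring))
  have m0 : ∀ φ, Measurable fun s => radJet φ (Phi e s p) := fun φ =>
    (measurable_radJet φ).comp (continuous_ray e p).measurable
  rw [lintegral_add_left (m0 ψ), lintegral_const_mul' _ _ (by finiteness),
    lintegral_finsetSum _ fun q _ => m0 _]
  exact add_le_add (enorm_rad1_le_radJet hψ e p ht ht1) (mul_le_mul_right
    (Finset.sum_le_sum fun q _ => enorm_rad1_le_radJet (rotOp_smooth q hψ) e p ht ht1) _)

/-- Near the origin: `∫₀¹ |∂_rψ| dt` along a ray, from spherical squares of side `δ = t^{3/4}`. -/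
lemma near_bound {γ : ℝ} (hγ1 : 1 < γ) {ψ : E3 → ℝ} {M : ℝ≥0∞} (h : WeightedBound γ ψ M)
    (hψ : ContDiff ℝ ∞ ψ) (e : OrthonormalBasis (Fin 3) ℝ E3) :
    ∫⁻ t in Ioo (0:ℝ) 1, ‖rad1 ψ (Phi e t (0, 0))‖ₑ ≤ 2112 * M := by
  have hw : ∀ s ∈ Ioo (0:ℝ) 2, 0 ≤ s → 1 ≤ (2:ℝ) ^ 2 * (1 + s) ^ (γ - 2) := by
    intro s hs hs0
    have h1 : (1 + s) ^ (-1 : ℝ) ≤ (1 + s) ^ (γ - 2) :=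
      Real.rpow_le_rpow_of_exponent_le (by linarith) (by linarith)
    have h2 : 1 / 4 ≤ (1 + s) ^ (-1 : ℝ) := by
      rw [Real.rpow_neg_one, ← one_div]
      exact one_div_le_one_div_of_le (by linarith) (by linarith [hs.2])
    linarith
  have hL := h.l2le hψ (measurableSet_Ioo (a := (0:ℝ)) (b := 2)) zero_le_two hw
  simp only [ENNReal.ofReal_ofNat] at hL
  set c : ℝ≥0∞ := 2 * M with hc
  have hJ : ∀ l : List RotIdx, l.length ≤ 1 →
      L2le (shellMeas (Ioo 0 2)) (radJet (l.foldr rotOp ψ)) (3 * c) := fun l hl => by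
    have := ((hL l 1 (by norm_num) (by omega)).const_mul 2).add (hL l 2 (by norm_num) (by omega))
    rwa [show 2 * c + c = 3 * c by ring] at this
  have hN0 : L2le (shellMeas (Ioo 0 2)) (radJet ψ) (3 * c) := hJ [] (by simp)
  have hN : ∀ q, L2le (shellMeas (Ioo 0 2)) (radJet (rotOp q ψ)) (3 * c) :=
    fun q => hJ [q] (by simp)
  set f3 : E3 → ℝ≥0∞ := fun y => ∑ q, ∑ q', ‖radOp (rotOp q' (rotOp q ψ)) y‖ₑ with hf3
  have hf3L : L2le (shellMeas (Ioo 0 1)) f3 (9 * c) := by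
    have : L2le (shellMeas (Ioo 0 2)) f3 (3 * (3 * c)) :=
      L2le.sum fun q => L2le.sum fun q' => hL [q', q] 1 (by norm_num) (by simp)
    rw [show 3 * (3 * c) = 9 * c by ring] at this
    exact this.mono_measure (shellMeas_mono (Ioo_subset_Ioo_right one_le_two))
  -- With `δ = t ^ a`, the lower-order terms are `O(δ^(-1/2) t^(-1/2))`, integrable for `a < 1`, and
  -- the top-order term needs `∫ δ² t⁻² dt < ∞`, that is `a > 1/2`; here `a = 3/4`.
  have hpow : ∀ t ∈ Ioo (0:ℝ) 1, 0 < t ^ (3 / 4 : ℝ) ∧ t ^ (3 / 4 : ℝ) ≤ 1 := fun t ht =>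
    ⟨Real.rpow_pos_of_pos ht.1 _, Real.rpow_le_one ht.1.le ht.2.le (by norm_num)⟩
  have hpt : ∀ t ∈ Ioo (0:ℝ) 1, ‖rad1 ψ (Phi e t (0, 0))‖ₑ ≤
      ENNReal.ofReal (t ^ (-7 / 8 : ℝ)) * (114 * c) +
        4 * ∫⁻ p in Q (t ^ (3 / 4 : ℝ)), f3 (Phi e t p) := by
    intro t ht
    obtain ⟨hδ, hδ1⟩ := hpow t ht
    have ht0 : 0 < t := ht.1
    set δ := t ^ (3 / 4 : ℝ) with hδdef
    have hδsq : √(δ / t) = t ^ (-1 / 8 : ℝ) := by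
      rw [Real.sqrt_eq_rpow, hδdef, ← Real.rpow_sub_one ht0.ne', ← Real.rpow_mul ht0.le]
      norm_num
    have hδsq2 : √(δ ^ 2 / t) = t ^ (1 / 4 : ℝ) := by
      rw [Real.sqrt_eq_rpow, hδdef, ← Real.rpow_mul_natCast ht0.le, ← Real.rpow_sub_one ht0.ne',
        ← Real.rpow_mul ht0.le]
      norm_num
    have hδi : δ⁻¹ = t ^ (-3 / 4 : ℝ) := by
      rw [hδdef, ← Real.rpow_neg ht0.le]
      norm_num
    have r1 : δ⁻¹ ^ 2 * (δ * √(δ / t)) = t ^ (-7 / 8 : ℝ) := by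
      rw [show δ⁻¹ ^ 2 * (δ * √(δ / t)) = δ⁻¹ * √(δ / t) by field_simp, hδi, hδsq,
        ← Real.rpow_add ht0]
      norm_num
    have r2 : δ⁻¹ * √(δ ^ 2 / t) ≤ t ^ (-7 / 8 : ℝ) := by
      rw [hδi, hδsq2, ← Real.rpow_add ht0]
      exact Real.rpow_le_rpow_of_exponent_ge ht0 ht.2.le (by norm_num)
    have m0 : Measurable fun p => ‖rad1 ψ (Phi e t p)‖ₑ :=
      ((measurable_rad1 ψ).comp (measurable_Phi e t)).enorm
    have m1 : Measurable fun p => radRot1 ψ (Phi e t p) :=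
      (measurable_radRot1 ψ).comp (measurable_Phi e t)
    have hQ := enorm_rad1_le_Q hψ e ht0 hδ
    rw [lintegral_add_left (by fun_prop), lintegral_add_left (by fun_prop),
      lintegral_const_mul' _ _ (by finiteness), lintegral_const_mul' _ _ (by finiteness),
      lintegral_const_mul' _ _ (by finiteness)] at hQ
    refine hQ.trans (add_le_add ?_ (mul_le_mul_right (lintegral_mono fun p =>
      Finset.sum_le_sum fun q _ => Finset.sum_le_sum fun q' _ => enorm_rad1_le _ _) 4))
    calc ENNReal.ofReal δ⁻¹ ^ 2 * (∫⁻ p in Q δ, ‖rad1 ψ (Phi e t p)‖ₑ) +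
          4 * ENNReal.ofReal δ⁻¹ * ∫⁻ p in Q δ, radRot1 ψ (Phi e t p)
        ≤ ENNReal.ofReal δ⁻¹ ^ 2 * (14 * (ENNReal.ofReal δ * ENNReal.ofReal √(δ / t)) * (3 * c)) +
          4 * ENNReal.ofReal δ⁻¹ * (6 * ENNReal.ofReal √(δ ^ 2 / t) * (3 * c)) :=
          add_le_add (mul_le_mul_right (near_rot0 hψ e hN0 hN ht0 ht.2.le hδ hδ1) _)
            (mul_le_mul_right (near_rot1 hψ e hN ht0 ht.2.le hδ hδ1) _)
      _ = ENNReal.ofReal (δ⁻¹ ^ 2 * (δ * √(δ / t))) * (42 * c) +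
          ENNReal.ofReal (δ⁻¹ * √(δ ^ 2 / t)) * (72 * c) := by
          rw [ENNReal.ofReal_mul (by positivity), ENNReal.ofReal_mul (p := δ) (by positivity),
            ENNReal.ofReal_mul (p := δ⁻¹) (by positivity), ENNReal.ofReal_pow (by positivity)]
          ring
      _ ≤ ENNReal.ofReal (t ^ (-7 / 8 : ℝ)) * (42 * c) +
          ENNReal.ofReal (t ^ (-7 / 8 : ℝ)) * (72 * c) := by
          rw [r1]
          gcongr
      _ = ENNReal.ofReal (t ^ (-7 / 8 : ℝ)) * (114 * c) := by ring
  have hA : MeasurableSet {z : ℝ × ℝ × ℝ | z.2 ∈ Q (z.1 ^ (3 / 4 : ℝ))} := by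
    have hm : Measurable fun z : ℝ × ℝ × ℝ => z.1 ^ (3 / 4 : ℝ) := by fun_prop
    have : {z : ℝ × ℝ × ℝ | z.2 ∈ Q (z.1 ^ (3 / 4 : ℝ))} =
        ({z | 0 < z.2.1} ∩ {z | z.2.1 < z.1 ^ (3 / 4 : ℝ)}) ∩
        ({z | 0 < z.2.2} ∩ {z | z.2.2 < z.1 ^ (3 / 4 : ℝ)}) := by
      ext z
      simp [Q]
    rw [this]
    exact ((measurableSet_lt measurable_const (by fun_prop)).inter
      (measurableSet_lt (by fun_prop) hm)).inter
      ((measurableSet_lt measurable_const (by fun_prop)).inter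
      (measurableSet_lt (by fun_prop) hm))
  have h3 := lintegral_shell_le e (measurableSet_Ioo (a := (0:ℝ)) (b := 1)) (fun s hs => hs.1)
    hf3L hA (fun t ht => Q_mono (hpow t ht).2) (K := 2) (by
      calc ∫⁻ t in Ioo (0:ℝ) 1, volume (Q (t ^ (3 / 4 : ℝ))) * ENNReal.ofReal (t ^ (-2 : ℝ))
          = ∫⁻ t in Ioo (0:ℝ) 1, ENNReal.ofReal (t ^ (-1 / 2 : ℝ)) := by
            refine setLIntegral_congr_fun measurableSet_Ioo fun t ht => ?_
            have ht0 : 0 < t := ht.1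
            rw [volume_Q (hpow t ht).1.le, ← ENNReal.ofReal_mul (by positivity),
              ← Real.rpow_mul_natCast ht0.le, ← Real.rpow_add ht0]
            norm_num
        _ = 2 := by
            rw [lintegral_rpow_zero_one (by norm_num)]
            norm_num
        _ ≤ 2 ^ 2 := by norm_num)
  refine (setLIntegral_mono' measurableSet_Ioo hpt).trans ?_
  rw [lintegral_add_left (by fun_prop), lintegral_mul_const _ (by fun_prop),
    lintegral_rpow_zero_one (by norm_num), lintegral_const_mul' _ _ (by finiteness)]
  refine (add_le_add_right (mul_le_mul_right h3 4) _).trans_eq ?_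
  rw [show (-7 / 8 + 1 : ℝ)⁻¹ = 8 by norm_num, ENNReal.ofReal_ofNat, hc]
  ring

/-! ### Conclusion -/

/-- The right-hand side of the weighted Sobolev inequality. -/
def weightedSum (γ : ℝ) (ψ : E3 → ℝ) : ℝ :=
  ∑ k ∈ Finset.range 4, ∑ m ∈ Finset.range (4 - k), ∑ β : Fin m → RotIdx,
    (∫ y : E3, (1 + ‖y‖) ^ (γ - 2) * (radOp^[k] (compRot β ψ) y) ^ 2) ^ (1/2 : ℝ)

lemma weight_integral_nonneg (γ : ℝ) (g : E3 → ℝ) :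
    0 ≤ ∫ y : E3, (1 + ‖y‖) ^ (γ - 2) * g y ^ 2 :=
  integral_nonneg fun y => by positivity

lemma weightedSum_nonneg (γ : ℝ) (ψ : E3 → ℝ) : 0 ≤ weightedSum γ ψ :=
  Finset.sum_nonneg fun _ _ => Finset.sum_nonneg fun _ _ => Finset.sum_nonneg fun _ _ =>
    Real.rpow_nonneg (weight_integral_nonneg γ _) _

lemma compact_foldr {ψ : E3 → ℝ} (hψ : HasCompactSupport ψ) (l : List RotIdx) :
    HasCompactSupport (l.foldr rotOp ψ) := by
  induction l with
  | nil => exact hψ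
  | cons q l ih => exact rotOp_compact q ih

/-- Each term of the sum is at most the whole sum, and its Bochner integral is a true integral. -/
lemma weightedBound_weightedSum (γ : ℝ) {ψ : E3 → ℝ} (hψ : ContDiff ℝ ∞ ψ)
    (hc : HasCompactSupport ψ) :
    WeightedBound γ ψ (ENNReal.ofReal (weightedSum γ ψ)) := by
  intro l k hk hkl
  set φ := l.foldr rotOp ψ with hφ
  set J := ∫ y : E3, (1 + ‖y‖) ^ (γ - 2) * (radOp^[k] φ y) ^ 2 with hJ
  have hJ0 : 0 ≤ J := weight_integral_nonneg γ _
  have hInt := integrable_weight (smooth_foldr hψ l) (compact_foldr hc l) γ hk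
  have h1 : ∫⁻ y, ENNReal.ofReal ((1 + ‖y‖) ^ (γ - 2)) * ‖radOp^[k] φ y‖ₑ ^ 2 =
      ENNReal.ofReal J := by
    rw [hJ, ofReal_integral_eq_lintegral_ofReal hInt (ae_of_all _ fun y => by positivity)]
    refine lintegral_congr fun y => ?_
    rw [ENNReal.ofReal_mul (by positivity), Real.enorm_eq_ofReal_abs,
      ← ENNReal.ofReal_pow (abs_nonneg _), sq_abs]
  have hcomp : compRot l.get ψ = φ := by rw [compRot, List.ofFn_get]
  have h2 : J ^ (1 / 2 : ℝ) ≤ weightedSum γ ψ := by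
    have hnn : ∀ (k m : ℕ) (β : Fin m → RotIdx),
        0 ≤ (∫ y : E3, (1 + ‖y‖) ^ (γ - 2) * (radOp^[k] (compRot β ψ) y) ^ 2) ^ (1/2 : ℝ) :=
      fun k m β => Real.rpow_nonneg (weight_integral_nonneg γ _) _
    rw [hJ, ← hcomp]
    refine (Finset.single_le_sum (fun β _ => hnn k l.length β) (Finset.mem_univ l.get)).trans ?_
    refine (Finset.single_le_sum (f := fun m => ∑ β : Fin m → RotIdx,
        (∫ y : E3, (1 + ‖y‖) ^ (γ - 2) * (radOp^[k] (compRot β ψ) y) ^ 2) ^ (1/2 : ℝ))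
      (fun m _ => Finset.sum_nonneg fun β _ => hnn k m β)
      (Finset.mem_range.2 (by omega : l.length < 4 - k))).trans ?_
    exact Finset.single_le_sum (f := fun k => ∑ m ∈ Finset.range (4 - k), ∑ β : Fin m → RotIdx,
        (∫ y : E3, (1 + ‖y‖) ^ (γ - 2) * (radOp^[k] (compRot β ψ) y) ^ 2) ^ (1/2 : ℝ))
      (fun k _ => Finset.sum_nonneg fun m _ => Finset.sum_nonneg fun β _ => hnn k m β)
      (Finset.mem_range.2 (by omega : k < 4))
  rw [h1, ← ENNReal.ofReal_pow (weightedSum_nonneg γ ψ)]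
  refine ENNReal.ofReal_le_ofReal ?_
  calc J = (J ^ (1 / 2 : ℝ)) ^ 2 := by
        rw [← Real.rpow_mul_natCast hJ0]; norm_num
    _ ≤ weightedSum γ ψ ^ 2 := pow_le_pow_left₀ (Real.rpow_nonneg hJ0 _) h2 2

/-- The frame whose first vector points in the direction of `x`. -/
lemma exists_frame {x : E3} (hx : x ≠ 0) :
    ∃ e : OrthonormalBasis (Fin 3) ℝ E3, Phi e ‖x‖ (0, 0) = x := by
  have hn : ‖x‖ ≠ 0 := norm_ne_zero_iff.2 hx
  have ho : Orthonormal ℝ (({0} : Set (Fin 3)).domRestrict fun _ => ‖x‖⁻¹ • x) := by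
    refine ⟨fun i => ?_, fun i j hij => absurd (Subsingleton.elim i j) hij⟩
    change ‖‖x‖⁻¹ • x‖ = 1
    rw [norm_smul, norm_inv, norm_norm, inv_mul_cancel₀ hn]
  obtain ⟨e, he⟩ := ho.exists_orthonormalBasis_extension_of_card_eq (by simp)
  refine ⟨e, ?_⟩
  simp [Phi, he 0 rfl, smul_smul, hn]

lemma abs_le_of_enorm_le {a C S : ℝ} (hC : 0 ≤ C) (hS : 0 ≤ S)
    (h : ‖a‖ₑ ≤ ENNReal.ofReal C * ENNReal.ofReal S) : |a| ≤ C * S := by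
  rwa [Real.enorm_eq_ofReal_abs, ← ENNReal.ofReal_mul hC,
    ENNReal.ofReal_le_ofReal_iff (by positivity)] at h

lemma weighted_pointwise {γ : ℝ} (hγ1 : 1 < γ) (hγ3 : γ < 3) {ψ : E3 → ℝ}
    (hψ : ContDiff ℝ ∞ ψ) (hc : HasCompactSupport ψ) {x : E3} (hx : x ≠ 0) :
    (1 + ‖x‖) ^ ((γ + 1) / 2) * |ψ x| ≤ 14720 * weightedSum γ ψ := by
  obtain ⟨e, he⟩ := exists_frame hx
  have hS := weightedSum_nonneg γ ψ
  have hB := weightedBound_weightedSum γ hψ hc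
  have hr : 0 < ‖x‖ := norm_pos_iff.2 hx
  rcases le_or_gt 1 ‖x‖ with h1 | h1
  · have h := far_bound hγ1 hB hψ e h1
    rw [he, ← ENNReal.ofReal_ofNat 1568, ← ENNReal.ofReal_mul (by norm_num)] at h
    have h2 := abs_le_of_enorm_le (by positivity) hS h
    have h3 : (1 + ‖x‖) ^ ((γ + 1) / 2) * (1 + ‖x‖) ^ (-(γ + 1) / 2) = 1 := by
      rw [← Real.rpow_add (by positivity), show (γ + 1) / 2 + -(γ + 1) / 2 = 0 by ring,
        Real.rpow_zero]
    calc (1 + ‖x‖) ^ ((γ + 1) / 2) * |ψ x|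
        ≤ (1 + ‖x‖) ^ ((γ + 1) / 2) *
          (1568 * (1 + ‖x‖) ^ (-(γ + 1) / 2) * weightedSum γ ψ) := by gcongr
      _ = 1568 * ((1 + ‖x‖) ^ ((γ + 1) / 2) * (1 + ‖x‖) ^ (-(γ + 1) / 2)) *
          weightedSum γ ψ := by ring
      _ ≤ 14720 * weightedSum γ ψ := by rw [h3]; linarith
  · have h := far_bound hγ1 hB hψ e le_rfl
    have hpow : ENNReal.ofReal ((1 + 1 : ℝ) ^ (-(γ + 1) / 2)) ≤ 1 := by
      rw [ENNReal.ofReal_le_one]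
      exact Real.rpow_le_one_of_one_le_of_nonpos (by norm_num) (by linarith)
    have h2 := enorm_le_add_ray hψ e (0, 0) hr h1.le
    rw [he] at h2
    have h3 := (lintegral_mono_set (Ioo_subset_Ioo_left hr.le)).trans (near_bound hγ1 hB hψ e)
    have h4 : ‖ψ x‖ₑ ≤ ENNReal.ofReal 3680 * ENNReal.ofReal (weightedSum γ ψ) := by
      refine h2.trans ((add_le_add (h.trans (mul_le_mul_left (mul_le_mul_right hpow _) _))
        h3).trans_eq ?_)
      rw [ENNReal.ofReal_ofNat, mul_one, ← add_mul]
      norm_num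
    have h5 := abs_le_of_enorm_le (by norm_num) hS h4
    have h6 : (1 + ‖x‖) ^ ((γ + 1) / 2) ≤ 4 := by
      calc (1 + ‖x‖) ^ ((γ + 1) / 2) ≤ 2 ^ ((γ + 1) / 2) :=
            Real.rpow_le_rpow (by positivity) (by linarith) (by linarith)
        _ ≤ 2 ^ (2 : ℝ) := Real.rpow_le_rpow_of_exponent_le (by norm_num) (by linarith)
        _ = 4 := by norm_num
    calc (1 + ‖x‖) ^ ((γ + 1) / 2) * |ψ x| ≤ 4 * (3680 * weightedSum γ ψ) := by gcongr
      _ = 14720 * weightedSum γ ψ := by ring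

end

/-- weighted Sobolev estimate on ℝ³: for `γ ∈ (1,3)` there is `C > 0` with
`sup_{x≠0} (1+|x|)^{(γ+1)/2}|ψ(x)|
  ≤ C·Σ_{k+|β|≤3} (∫ (1+|x|)^{γ−2} |((⟨r⟩∂_r)^k Ω^β ψ)(x)|² dx)^{1/2}`
for every smooth compactly supported `ψ`. -/
theorem weighted_sobolev (γ : ℝ) (hγ1 : 1 < γ) (hγ3 : γ < 3) :
    ∃ C > 0, ∀ ψ : E3 → ℝ, ContDiff ℝ (⊤ : ℕ∞) ψ → HasCompactSupport ψ →
      ∀ x : E3, x ≠ 0 →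
        (1 + ‖x‖) ^ ((γ + 1) / 2) * |ψ x| ≤
          C * ∑ k ∈ Finset.range 4, ∑ m ∈ Finset.range (4 - k),
            ∑ β : Fin m → RotIdx,
              (∫ y : E3, (1 + ‖y‖) ^ (γ - 2) * (radOp^[k] (compRot β ψ) y) ^ 2) ^ (1/2 : ℝ) := by
  refine ⟨14720, by norm_num, fun ψ hψ hc x hx => ?_⟩
  exact weighted_pointwise hγ1 hγ3 hψ hc hx
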